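/- Assume the Riemann Hypothesis. There exists an absolute constant C > 0 such that for all real r, x and all σ ∈ [0,1] with r > 1, ln x > 2·(1+σ)·ln r, and √x / r ≥ 2657, there exists ã ∈ [(1 − 2σ′·ln r/(ln x + 2σ′·ln r))², (1 + 2(1+σ)·ln r/(ln x − 2(1+σ)·ln r))²], where σ′ = max(σ, 1−σ), with |N^{ALGV}_{r,σ}(x) − ã·(4x/ln²x)·(ln r − (ln r)/r)| ≤ C·x^{3/4}·r^{1/2}, where N^{ALGV}_{r,σ}(x) = #{(p,q) : p, q prime, r^{σ−1}·√x < p ≤ r^{σ}·√x and x/(r·p) < q ≤ x/p}. -/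

import Mathlib

/-- Prime-pair count of the shifted algorithmic notion: ordered pairs of primes `(p,q)` with
`r^{σ−1}·√x < p ≤ r^{σ}·√x` and `x/(r·p) < q ≤ x/p`. -/
noncomputable def NALGV (r σ x : ℝ) : ℕ :=
  Nat.card {pq : ℕ × ℕ // pq.1.Prime ∧ pq.2.Prime ∧
    r ^ (σ - 1) * Real.sqrt x < (pq.1 : ℝ) ∧ (pq.1 : ℝ) ≤ r ^ σ * Real.sqrt x ∧
    x / (r * (pq.1 : ℝ)) < (pq.2 : ℝ) ∧ (pq.2 : ℝ) ≤ x / (pq.1 : ℝ)}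

/-!
If `ζ` has no zeros with real part greater than `Θ`, then the Borel–Carathéodory theorem, applied
to a logarithm of `(s - 1) ζ(s)` on discs inside the zero-free half-plane, bounds `ζ'/ζ` there by
`O(log |t|)`. Shifting the contour in the Mellin inversion formula for the integrated
Chebyshev function `ψ₁` and differencing gives `θ(x) = x + O(x ^ e)` for every
`e > max Θ (1 / 2)`.

By partial summation, the sum of `log p * log q` over the pairs counted by `NALGV` is
`T = x (1 - 1/r) log r` up to a power-saving error. On the support, `log p * log q` deviates from
`(log x)² / 4` by a relative amount of order `log r / log x`, and dividing by the extreme values of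
the weight encloses the count in an interval strictly inside the one allowed by the coefficient.
The slack, again of relative order `log r / log x`, absorbs the error of the weighted sum, except
when `r` is so close to `1` that this error is `O(x ^ (3 / 4))`. The condition `e < 2 / 3` is what
makes these two cases exhaustive.
-/

open Filter Topology Metric MeasureTheory ArithmeticFunction

section ZetaGrowth

lemma norm_ofReal_cpow_sub_ofReal_cpow_le {u v M : ℝ} {z : ℂ} (hu : 0 < u) (huv : u ≤ v)
    (hM : ∀ t ∈ Set.Ico u v, t ^ (z.re - 1) ≤ M) :
    ‖(v : ℂ) ^ z - (u : ℂ) ^ z‖ ≤ ‖z‖ * M * (v - u) := by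
  rcases eq_or_ne z 0 with rfl | hz
  · simp
  refine norm_image_sub_le_of_norm_deriv_le_segment' (f := fun t : ℝ => (t : ℂ) ^ z)
    (f' := fun t : ℝ => z * (t : ℂ) ^ (z - 1)) (fun t ht => ?_) (fun t ht => ?_) v ⟨huv, le_rfl⟩
  · exact (hasDerivAt_ofReal_cpow_const (hu.trans_le ht.1).ne' hz).hasDerivWithinAt
  · rw [norm_mul, Complex.norm_cpow_eq_rpow_re_of_pos (hu.trans_le ht.1)]
    gcongr
    simpa using hM t ht

/-- The term `(s - 1) (N⁻ˢ - ∫ t in N..N+1, t⁻ˢ)` of the series expressing `riemannZeta₁` to the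
right of the imaginary axis, with the integral evaluated so that the term is entire in `s`. -/
noncomputable def zetaIncrement (N : ℝ) (s : ℂ) : ℂ :=
  (s - 1) * (N : ℂ) ^ (-s) + ((N + 1 : ℝ) : ℂ) ^ (1 - s) - (N : ℂ) ^ (1 - s)

lemma differentiable_zetaIncrement {N : ℝ} (hN : 0 < N) : Differentiable ℂ (zetaIncrement N) := by
  have hN₀ : (N : ℂ) ≠ 0 := by exact_mod_cast hN.ne'
  have hN₁ : ((N + 1 : ℝ) : ℂ) ≠ 0 := by exact_mod_cast (by positivity : N + 1 ≠ 0)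
  intro s
  refine ((DifferentiableAt.mul (by fun_prop) ?_).add ?_).sub ?_ <;>
    exact DifferentiableAt.const_cpow (by fun_prop) (Or.inl ‹_›)

lemma norm_zetaIncrement_le {N : ℝ} {s : ℂ} (hN : 0 < N) (hs : 0 < s.re) :
    ‖zetaIncrement N s‖ ≤ ‖s - 1‖ * ‖s‖ * N ^ (-s.re - 1) := by
  rcases eq_or_ne s 1 with rfl | hs₁
  · simp [zetaIncrement]
  have hderiv : ∀ t ∈ Set.Icc N (N + 1), HasDerivWithinAt
      (fun t : ℝ => (s - 1) * (N : ℂ) ^ (-s) * t + (t : ℂ) ^ (1 - s))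
      ((s - 1) * ((N : ℂ) ^ (-s) - (t : ℂ) ^ (-s))) (Set.Icc N (N + 1)) t := by
    intro t ht
    have hcpow := hasDerivAt_ofReal_cpow_const (hN.trans_le ht.1).ne' (sub_ne_zero.2 hs₁.symm)
    have hlinear := (Complex.ofRealCLM.hasDerivAt (x := t)).const_mul ((s - 1) * (N : ℂ) ^ (-s))
    refine ((hlinear.add hcpow).congr_deriv ?_).hasDerivWithinAt
    rw [sub_right_comm, sub_self, zero_sub, Complex.ofRealCLM_apply, Complex.ofReal_one]
    ring
  have hbound : ∀ t ∈ Set.Ico N (N + 1), ‖(s - 1) * ((N : ℂ) ^ (-s) - (t : ℂ) ^ (-s))‖ ≤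
      ‖s - 1‖ * ‖s‖ * N ^ (-s.re - 1) := by
    intro t ht
    have hsub := norm_ofReal_cpow_sub_ofReal_cpow_le (z := -s) hN ht.1 fun u hu =>
      Real.rpow_le_rpow_of_nonpos hN hu.1 (by simp; linarith)
    rw [norm_neg, Complex.neg_re] at hsub
    rw [norm_mul, norm_sub_rev ((N : ℂ) ^ (-s)), mul_assoc]
    gcongr
    exact hsub.trans (mul_le_of_le_one_right (by positivity) (by linarith [ht.2]))
  have hmean := norm_image_sub_le_of_norm_deriv_le_segment' hderiv hbound (N + 1)
    ⟨by linarith, le_rfl⟩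
  convert hmean using 1
  · rw [zetaIncrement]
    push_cast
    ring_nf
  · ring

lemma summable_nat_add_one_rpow {p : ℝ} (hp : p < -1) :
    Summable fun n : ℕ => ((n : ℝ) + 1) ^ p := by
  simpa using (summable_nat_add_iff 1).2 (Real.summable_nat_rpow.2 hp)

lemma sum_range_zetaIncrement (s : ℂ) (n : ℕ) :
    ∑ k ∈ Finset.range n, zetaIncrement (k + 1) s =
      (s - 1) * ∑ k ∈ Finset.range n, 1 / ((k : ℂ) + 1) ^ s
        + (((n + 1 : ℝ) : ℂ) ^ (1 - s) - 1) := by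
  induction n with
  | zero => simp
  | succ n ih =>
    rw [Finset.sum_range_succ, ih, Finset.sum_range_succ, zetaIncrement, Complex.cpow_neg]
    push_cast
    ring

lemma hasSum_one_div_nat_add_one_cpow {s : ℂ} (hs : 1 < s.re) :
    HasSum (fun n : ℕ => 1 / ((n : ℂ) + 1) ^ s) (riemannZeta s) := by
  rw [zeta_eq_tsum_one_div_nat_add_one_cpow hs]
  refine Summable.hasSum ?_
  simpa using (summable_nat_add_iff 1).2 (Complex.summable_one_div_nat_cpow.2 hs)

lemma riemannZeta₁_eq_sub_one_mul {s : ℂ} (hs : s ≠ 1) :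
    riemannZeta₁ s = (s - 1) * riemannZeta s := by
  rw [riemannZeta_eq_inv_sub_mul hs, mul_inv_cancel_left₀ (sub_ne_zero.2 hs)]

lemma one_add_tsum_zetaIncrement_of_one_lt_re {s : ℂ} (hs : 1 < s.re) :
    1 + ∑' n : ℕ, zetaIncrement (n + 1) s = riemannZeta₁ s := by
  have hsummable : Summable fun n : ℕ => zetaIncrement (n + 1) s :=
    .of_norm_bounded ((summable_nat_add_one_rpow (p := -s.re - 1) (by linarith)).mul_left _)
      fun n => norm_zetaIncrement_le (by positivity) (by linarith)
  have hremainder : Tendsto (fun n : ℕ => ((n + 1 : ℝ) : ℂ) ^ (1 - s)) atTop (𝓝 0) := by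
    rw [tendsto_zero_iff_norm_tendsto_zero]
    have hnorm (n : ℕ) : ‖((n + 1 : ℝ) : ℂ) ^ (1 - s)‖ = (n + 1 : ℝ) ^ (-(s.re - 1)) := by
      rw [Complex.norm_cpow_eq_rpow_re_of_pos (by positivity)]
      simp
    simp_rw [hnorm]
    exact (tendsto_rpow_neg_atTop (by linarith)).comp
      (tendsto_atTop_add_const_right _ _ tendsto_natCast_atTop_atTop)
  have hpartial := ((hasSum_one_div_nat_add_one_cpow hs).tendsto_sum_nat.const_mul (s - 1)).add
    (hremainder.sub_const 1)
  simp_rw [← sum_range_zetaIncrement] at hpartial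
  rw [tendsto_nhds_unique hsummable.tendsto_sum_tsum_nat hpartial,
    riemannZeta₁_eq_sub_one_mul (by rintro rfl; simp at hs)]
  ring

lemma differentiableOn_tsum_zetaIncrement {δ : ℝ} (hδ : 0 < δ) (B : ℝ) :
    DifferentiableOn ℂ (fun s => ∑' n : ℕ, zetaIncrement (n + 1) s)
      ({s | δ < s.re} ∩ ball 0 B) := by
  refine Complex.differentiableOn_tsum_of_summable_norm
    (u := fun n : ℕ => (B + 1) * B * ((n : ℝ) + 1) ^ (-δ - 1))
    ((summable_nat_add_one_rpow (by linarith)).mul_left _)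
    (fun n => (differentiable_zetaIncrement (by positivity)).differentiableOn)
    ((isOpen_lt continuous_const Complex.continuous_re).inter isOpen_ball) ?_
  rintro n s ⟨hs, hsB⟩
  change δ < s.re at hs
  rw [mem_ball_zero_iff] at hsB
  have hsub : ‖s - 1‖ ≤ B + 1 := (norm_sub_le _ _).trans (by simpa using hsB.le)
  refine (norm_zetaIncrement_le (by positivity) (hδ.trans hs)).trans ?_
  have hB : 0 ≤ B := (norm_nonneg s).trans hsB.le
  gcongr
  linarith

lemma one_add_tsum_zetaIncrement {s : ℂ} (hs : 0 < s.re) :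
    1 + ∑' n : ℕ, zetaIncrement (n + 1) s = riemannZeta₁ s := by
  set U : Set ℂ := {z | min (s.re / 2) 1 < z.re} ∩ ball 0 (‖s‖ + 3)
  have hUo : IsOpen U := (isOpen_lt continuous_const Complex.continuous_re).inter isOpen_ball
  have hUc : IsPreconnected U :=
    ((convex_halfSpace_re_gt _).inter (convex_ball _ _)).isPreconnected
  have hdiff := (differentiableOn_tsum_zetaIncrement (δ := min (s.re / 2) 1) (by positivity)
    (‖s‖ + 3)).const_add 1
  have htwo : (2 : ℂ) ∈ U := by
    refine ⟨(min_le_right _ _).trans_lt (show (1 : ℝ) < (2 : ℂ).re by simp), ?_⟩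
    simpa using by linarith [norm_nonneg s]
  have hnear : (fun s => 1 + ∑' n : ℕ, zetaIncrement (n + 1) s) =ᶠ[𝓝 2] riemannZeta₁ := by
    filter_upwards [(isOpen_lt continuous_const Complex.continuous_re).mem_nhds
      (show (1 : ℝ) < (2 : ℂ).re by simp)] with z hz
    using one_add_tsum_zetaIncrement_of_one_lt_re hz
  exact (hdiff.analyticOnNhd hUo).eqOn_of_preconnected_of_eventuallyEq
    (differentiable_riemannZeta₁.differentiableOn.analyticOnNhd hUo) hUc htwo hnear
    ⟨(min_le_left _ _).trans_lt (half_lt_self hs), by simp⟩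

theorem exists_norm_riemannZeta₁_le {δ : ℝ} (hδ : 0 < δ) :
    ∃ K : ℝ, 1 ≤ K ∧ ∀ s : ℂ, δ ≤ s.re → ‖riemannZeta₁ s‖ ≤ K * (1 + ‖s‖) ^ 2 := by
  have hsummable := summable_nat_add_one_rpow (p := -δ - 1) (by linarith)
  set S := ∑' n : ℕ, ((n : ℝ) + 1) ^ (-δ - 1)
  have hS : 0 ≤ S := tsum_nonneg fun n => by positivity
  refine ⟨1 + S, by linarith, fun s hs => ?_⟩
  have htail : ‖∑' n : ℕ, zetaIncrement (n + 1) s‖ ≤ ‖s - 1‖ * ‖s‖ * S := by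
    refine tsum_of_norm_bounded (hsummable.hasSum.mul_left _) fun n => ?_
    refine (norm_zetaIncrement_le (by positivity) (hδ.trans_le hs)).trans ?_
    gcongr
    simp
  have hsub : ‖s - 1‖ ≤ 1 + ‖s‖ := (norm_sub_le _ _).trans (by simp [add_comm])
  calc ‖riemannZeta₁ s‖ = ‖1 + ∑' n : ℕ, zetaIncrement (n + 1) s‖ := by
        rw [one_add_tsum_zetaIncrement (hδ.trans_le hs)]
    _ ≤ 1 + ‖s - 1‖ * ‖s‖ * S := (norm_add_le _ _).trans (by simpa using htail)
    _ ≤ 1 + (1 + ‖s‖) * (1 + ‖s‖) * S := by gcongr; linarith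
    _ ≤ (1 + S) * (1 + ‖s‖) ^ 2 := by nlinarith [norm_nonneg s]

end ZetaGrowth

section LogDerivative

lemma exists_eq_mul_exp_of_ne_zero_on_ball {f : ℂ → ℂ} {c : ℂ} {R : ℝ}
    (hf : DifferentiableOn ℂ f (ball c R)) (hf₀ : ∀ z ∈ ball c R, f z ≠ 0) :
    ∃ L : ℂ → ℂ, L c = 0 ∧ (∀ z ∈ ball c R, HasDerivAt L (logDeriv f z) z) ∧
      ∀ z ∈ ball c R, f z = f c * Complex.exp (L z) := by
  have hlogDeriv : DifferentiableOn ℂ (logDeriv f) (ball c R) := (hf.deriv isOpen_ball).div hf hf₀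
  obtain ⟨L, hLc, hL⟩ := hlogDeriv.isExactOn_ball.with_val_at c 0
  refine ⟨L, hLc, hL, fun z hz => ?_⟩
  have hderiv : ∀ w ∈ ball c R, HasDerivAt (fun w => f w * Complex.exp (-L w)) 0 w := by
    intro w hw
    have hfw := (hf.differentiableAt (isOpen_ball.mem_nhds hw)).hasDerivAt
    refine (hfw.mul (hL w hw).neg.cexp).congr_deriv ?_
    rw [logDeriv_apply]
    field_simp [hf₀ w hw]
    simp
  have hconst := isOpen_ball.is_const_of_deriv_eq_zero (convex_ball c R).isPreconnected
    (fun w hw => (hderiv w hw).differentiableAt.differentiableWithinAt)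
    (fun w hw => (hderiv w hw).deriv) hz (mem_ball_self (pos_of_mem_ball hz))
  simp only [hLc, neg_zero, Complex.exp_zero, mul_one] at hconst
  rw [← hconst, mul_assoc, ← Complex.exp_add, neg_add_cancel, Complex.exp_zero, mul_one]

theorem norm_logDeriv_le_of_norm_le_exp {f : ℂ → ℂ} {c s : ℂ} {R M : ℝ} (hM : 0 < M)
    (hf : DifferentiableOn ℂ f (ball c R)) (hf₀ : ∀ z ∈ ball c R, f z ≠ 0)
    (hbound : ∀ z ∈ ball c R, ‖f z‖ ≤ ‖f c‖ * Real.exp M) (hs : s ∈ ball c R) :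
    ‖logDeriv f s‖ ≤ 8 * M * R / (R - dist s c) ^ 2 := by
  obtain ⟨L, hLc, hL, hfL⟩ := exists_eq_mul_exp_of_ne_zero_on_ball hf hf₀
  have hR : 0 < R := pos_of_mem_ball hs
  have hLre : ∀ z ∈ ball c R, (L z).re ≤ M := by
    intro z hz
    have hz' := hbound z hz
    rw [hfL z hz, norm_mul, Complex.norm_exp] at hz'
    exact Real.exp_le_exp.1
      (le_of_mul_le_mul_left hz' (norm_pos_iff.2 (hf₀ c (mem_ball_self hR))))
  set d := (R - dist s c) / 2 with hd
  have hd₀ : 0 < d := by linarith [mem_ball.1 hs]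
  have hclosedBall : ∀ z ∈ closedBall s d, dist z c ≤ R - d := fun z hz => by
    linarith [dist_triangle z s c, mem_closedBall.1 hz]
  have hLbound : ∀ z ∈ closedBall s d, ‖L z‖ ≤ 2 * M * R / d := by
    intro z hz
    have hzc : ‖z - c‖ ≤ R - d := by simpa [dist_eq_norm] using hclosedBall z hz
    have hmem : ∀ w ∈ ball (0 : ℂ) R, c + w ∈ ball c R := by simp
    have hBC := Complex.borelCaratheodory_zero (f := fun w => L (c + w)) (z := z - c) hM
      (fun w hw => ((hL _ (hmem w hw)).comp_const_add c w).differentiableAt.differentiableWithinAt)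
      (fun w hw => hLre _ (hmem w hw)) hR (by simpa using hzc.trans_lt (by linarith)) (by simpa)
    rw [add_sub_cancel] at hBC
    refine hBC.trans ?_
    gcongr <;> linarith
  have hcauchy := Complex.norm_deriv_le_of_forall_mem_sphere_norm_le (f := L) hd₀
    (DifferentiableOn.diffContOnCl fun z hz => ?_)
    (fun z hz => hLbound z (sphere_subset_closedBall hz))
  · rw [(hL s hs).deriv] at hcauchy
    refine hcauchy.trans (le_of_eq ?_)
    rw [show R - dist s c = 2 * d by rw [hd]; ring]
    field_simp
    ring
  · rw [closure_ball _ hd₀.ne'] at hz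
    have hz' : z ∈ ball c R := mem_ball.2 (by linarith [hclosedBall z hz])
    exact (hL z hz').differentiableAt.differentiableWithinAt

lemma one_fourth_le_norm_riemannZeta {s : ℂ} (hs : 2 ≤ s.re) : 1 / 4 ≤ ‖riemannZeta s‖ := by
  have hζ := hasSum_one_div_nat_add_one_cpow (s := s) (by linarith)
  have htail : ‖∑' n : ℕ, 1 / (((n + 1 : ℕ) : ℂ) + 1) ^ s‖ ≤
      Real.pi ^ 2 / 6 - ∑ n ∈ Finset.range 2, 1 / (n : ℝ) ^ 2 := by
    refine tsum_of_norm_bounded ((hasSum_nat_add_iff' 2).2 hasSum_zeta_two) fun n => ?_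
    have hcast : ((n + 1 : ℕ) : ℂ) + 1 = ((n + 2 : ℝ) : ℂ) := by push_cast; ring
    rw [hcast, norm_div, norm_one, Complex.norm_cpow_eq_rpow_re_of_pos (by positivity)]
    push_cast
    rw [← Real.rpow_two]
    gcongr
    linarith [(n.cast_nonneg : (0 : ℝ) ≤ n)]
  norm_num [Finset.sum_range_succ] at htail
  have hpi : Real.pi ^ 2 < 10 := by nlinarith [Real.pi_lt_d2, Real.pi_pos]
  rw [← hζ.tsum_eq, hζ.summable.tsum_eq_zero_add]
  refine le_trans ?_ (norm_sub_le_norm_add _ _)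
  norm_num
  linarith

lemma one_fourth_le_norm_riemannZeta₁ {s : ℂ} (hs : 2 ≤ s.re) : 1 / 4 ≤ ‖riemannZeta₁ s‖ := by
  have hsub : 1 ≤ ‖s - 1‖ :=
    le_trans (by simp; linarith) ((le_abs_self _).trans (Complex.abs_re_le_norm (s - 1)))
  rw [riemannZeta₁_eq_sub_one_mul (by rintro rfl; norm_num at hs), norm_mul]
  nlinarith [one_fourth_le_norm_riemannZeta hs]

lemma riemannZeta₁_ne_zero_of_lt_re {Θ : ℝ} {s : ℂ}
    (hζ : ∀ s : ℂ, riemannZeta s = 0 → s.re ≤ Θ) (hs : Θ < s.re) : riemannZeta₁ s ≠ 0 := by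
  rcases eq_or_ne s 1 with rfl | hs₁
  · simp
  · rw [riemannZeta₁_eq_sub_one_mul hs₁]
    exact mul_ne_zero (sub_ne_zero.2 hs₁) fun h => (hζ s h).not_gt hs

lemma lt_re_of_mem_ball {c z : ℂ} {R : ℝ} (hz : z ∈ ball c R) : c.re - R < z.re := by
  have hre := (Complex.abs_re_le_norm (z - c)).trans_lt (mem_ball_iff_norm.1 hz)
  rw [Complex.sub_re] at hre
  linarith [(abs_lt.1 hre).1]

lemma exists_norm_riemannZeta₁_le_on_ball {δ : ℝ} (hδ : 0 < δ) :
    ∃ K : ℝ, 1 < K ∧ ∀ t : ℝ, ∀ z ∈ ball (2 + t * Complex.I) (2 - δ),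
      ‖riemannZeta₁ z‖ ≤ ‖riemannZeta₁ (2 + t * Complex.I)‖ * (K * (1 + |t|) ^ 2) := by
  obtain ⟨K, hK₁, hK⟩ := exists_norm_riemannZeta₁_le hδ
  refine ⟨100 * K, by linarith, fun t z hz => ?_⟩
  set c : ℂ := 2 + t * Complex.I with hc
  have hcre : c.re = 2 := by simp [hc]
  have hcnorm : ‖c‖ ≤ 2 + |t| := (norm_add_le _ _).trans (by simp)
  have hznorm : 1 + ‖z‖ ≤ 5 * (1 + |t|) := by
    have := norm_le_norm_add_norm_sub' z c
    linarith [mem_ball_iff_norm.1 hz, abs_nonneg t]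
  calc ‖riemannZeta₁ z‖ ≤ K * (1 + ‖z‖) ^ 2 := hK z (by linarith [lt_re_of_mem_ball hz])
    _ ≤ K * (5 * (1 + |t|)) ^ 2 := by gcongr
    _ = 1 / 4 * (100 * K * (1 + |t|) ^ 2) := by ring
    _ ≤ ‖riemannZeta₁ c‖ * (100 * K * (1 + |t|) ^ 2) := by
        gcongr
        exact one_fourth_le_norm_riemannZeta₁ hcre.ge

lemma log_mul_sq_le_rpow {K y ε : ℝ} (hK : 0 ≤ K) (hy : 0 ≤ y) (hε : 0 < ε) :
    Real.log (K * y ^ 2) ≤ K ^ (ε / 2) / (ε / 2) * y ^ ε := by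
  refine (Real.log_le_rpow_div (by positivity) (half_pos hε)).trans_eq ?_
  rw [Real.mul_rpow hK (by positivity), ← Real.rpow_natCast_mul hy]
  push_cast
  rw [mul_div_cancel₀ ε two_ne_zero, mul_div_right_comm]

theorem exists_norm_logDeriv_riemannZeta₁_le {Θ a ε : ℝ}
    (hζ : ∀ s : ℂ, riemannZeta s = 0 → s.re ≤ Θ) (hΘ : 0 ≤ Θ) (ha : Θ < a) (hε : 0 < ε) :
    ∃ K : ℝ, 0 < K ∧ ∀ s : ℂ, a ≤ s.re → s.re ≤ 2 →
      ‖logDeriv riemannZeta₁ s‖ ≤ K * (1 + |s.im|) ^ ε := by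
  set δ := (Θ + a) / 2 with hδ
  obtain ⟨K, hK₁, hK⟩ := exists_norm_riemannZeta₁_le_on_ball (δ := δ) (by linarith)
  have hgap : 0 < a - δ := by linarith
  refine ⟨8 * (K ^ (ε / 2) / (ε / 2)) * 2 / (a - δ) ^ 2, by positivity, fun s has hs => ?_⟩
  set c : ℂ := 2 + s.im * Complex.I with hc
  have hdist : dist s c = 2 - s.re := by
    rw [Complex.dist_of_im_eq (by simp [hc]), Real.dist_eq, abs_sub_comm]
    simpa [hc] using hs
  have hlog := log_mul_sq_le_rpow (K := K) (y := 1 + |s.im|) (by linarith) (by positivity) hε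
  have hlogpos : 1 < K * (1 + |s.im|) ^ 2 :=
    hK₁.trans_le (le_mul_of_one_le_right (by linarith) (by nlinarith [abs_nonneg s.im]))
  refine (norm_logDeriv_le_of_norm_le_exp (R := 2 - δ) (Real.log_pos hlogpos)
    differentiable_riemannZeta₁.differentiableOn
    (fun z hz => riemannZeta₁_ne_zero_of_lt_re hζ ?_) (fun z hz => ?_)
    (mem_ball.2 (by rw [hdist]; linarith))).trans ?_
  · have hre := lt_re_of_mem_ball hz
    simp only [hc, Complex.add_re, Complex.re_ofNat, Complex.re_ofReal_mul, Complex.I_re] at hre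
    linarith
  · rw [Real.exp_log (by linarith)]
    exact hK _ z hz
  · rw [hdist, mul_comm _ ((1 + |s.im|) ^ ε), ← mul_div_assoc]
    gcongr ?_ / ?_ ^ 2
    · calc 8 * Real.log (K * (1 + |s.im|) ^ 2) * (2 - δ)
          ≤ 8 * (K ^ (ε / 2) / (ε / 2) * (1 + |s.im|) ^ ε) * 2 := by
            gcongr <;> linarith
        _ = _ := by ring
    · linarith

end LogDerivative

section MellinTransform

lemma hasMellin_indicator_Ioi_one {g : ℝ → ℂ} {s : ℂ}
    (hg : IntegrableOn (fun t : ℝ => (t : ℂ) ^ (s - 1) • g t) (Set.Ioi 1)) :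
    HasMellin ((Set.Ioi 1).indicator g) s (∫ t in Set.Ioi (1 : ℝ), (t : ℂ) ^ (s - 1) • g t) := by
  have hsub : Set.Ioi (1 : ℝ) ⊆ Set.Ioi 0 := Set.Ioi_subset_Ioi zero_le_one
  simp_rw [HasMellin, MellinConvergent, mellin, ← Set.indicator_smul, IntegrableOn,
    integrable_indicator_iff measurableSet_Ioi, integral_indicator measurableSet_Ioi, IntegrableOn,
    Measure.restrict_restrict_of_subset hsub]
  exact ⟨hg, trivial⟩

lemma hasMellin_cpow_Ioi (a : ℂ) {s : ℂ} (hs : s.re + a.re < 0) :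
    HasMellin ((Set.Ioi 1).indicator fun t : ℝ => (t : ℂ) ^ a) s (-1 / (s + a)) := by
  have hcongr : Set.EqOn (fun t : ℝ => (t : ℂ) ^ (s + a - 1))
      (fun t : ℝ => (t : ℂ) ^ (s - 1) • (t : ℂ) ^ a) (Set.Ioi 1) := by
    intro t ht
    have ht₀ : (t : ℂ) ≠ 0 := by exact_mod_cast (zero_lt_one.trans ht).ne'
    simp only [smul_eq_mul, ← Complex.cpow_add _ _ ht₀]
    ring_nf
  have hre : (s + a - 1).re < -1 := by simpa using by linarith
  have h := hasMellin_indicator_Ioi_one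
    ((integrableOn_Ioi_cpow_of_lt hre one_pos).congr_fun hcongr measurableSet_Ioi)
  rwa [← setIntegral_congr_fun measurableSet_Ioi hcongr, integral_Ioi_cpow_of_lt hre one_pos,
    sub_add_cancel, Complex.ofReal_one, Complex.one_cpow] at h

lemma integrableOn_Ioi_one_cpow_smul {f : ℝ → ℝ} (hf : Measurable f) {B k : ℝ} {z : ℂ}
    (hbound : ∀ t, 1 < t → |f t| ≤ B * t ^ k) (hz : z.re + k < -1) :
    IntegrableOn (fun t : ℝ => (t : ℂ) ^ z • (f t : ℂ)) (Set.Ioi 1) := by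
  have hcpow : ContinuousOn (fun t : ℝ => (t : ℂ) ^ z) (Set.Ioi 1) := fun t ht =>
    (Complex.continuousAt_ofReal_cpow_const t z
      (Or.inr (zero_lt_one.trans ht).ne')).continuousWithinAt
  refine Integrable.mono' ((integrableOn_Ioi_rpow_of_lt hz one_pos).const_mul B)
    ((hcpow.aestronglyMeasurable measurableSet_Ioi).smul hf.complex_ofReal.aestronglyMeasurable)
    ((ae_restrict_iff' measurableSet_Ioi).2 (.of_forall fun t ht => ?_))
  have ht₀ : (0 : ℝ) < t := zero_lt_one.trans ht
  rw [norm_smul, Complex.norm_real, Complex.norm_cpow_eq_rpow_re_of_pos ht₀, Real.rpow_add ht₀,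
    mul_left_comm]
  gcongr
  exact hbound t ht

lemma hasMellin_sum_Ioc_floor {c : ℕ → ℝ} (hc : ∀ n, 0 ≤ c n) {B k : ℝ} (hk : 0 ≤ k)
    (hbound : ∀ x, 0 ≤ x → ∑ n ∈ Finset.Ioc 0 ⌊x⌋₊, c n ≤ B * x ^ k) {s : ℂ} (hs : k < s.re) :
    HasMellin ((Set.Ioi 1).indicator fun t => ((∑ n ∈ Finset.Ioc 0 ⌊t⌋₊, c n : ℝ) : ℂ)) (-s)
      (LSeries (fun n => c n) s / s) := by
  have hmono : Monotone fun t : ℝ => ∑ n ∈ Finset.Ioc 0 ⌊t⌋₊, c n := fun x y hxy =>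
    Finset.sum_le_sum_of_subset_of_nonneg (Finset.Ioc_subset_Ioc_right (Nat.floor_mono hxy))
      fun n _ _ => hc n
  have hnonneg (m : ℕ) : 0 ≤ ∑ n ∈ Finset.Ioc 0 m, c n := Finset.sum_nonneg fun n _ => hc n
  have hintegrable := integrableOn_Ioi_one_cpow_smul (z := -s - 1) hmono.measurable
    (fun t ht => by rw [abs_of_nonneg (hnonneg _)]; exact hbound t (by linarith))
    (by simp only [Complex.sub_re, Complex.neg_re, Complex.one_re]; linarith)
  have hO : (fun n => ∑ j ∈ Finset.Icc 1 n, c j) =O[atTop] fun n : ℕ => (n : ℝ) ^ k := by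
    refine .of_bound B (.of_forall fun n => ?_)
    rw [← zero_add 1, Finset.Icc_add_one_left_eq_Ioc, Real.norm_of_nonneg (hnonneg n),
      Real.norm_of_nonneg (by positivity)]
    simpa using hbound n n.cast_nonneg
  convert hasMellin_indicator_Ioi_one hintegrable using 1
  rw [LSeries_eq_mul_integral_of_nonneg c hk hs hO hc,
    mul_div_cancel_left₀ _ (by rintro rfl; simp at hs; linarith)]
  refine setIntegral_congr_fun measurableSet_Ioi fun t _ => ?_
  simp only [smul_eq_mul, neg_add', mul_comm, Complex.ofReal_sum]
  rfl

end MellinTransform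

section IntegratedPsi

/-- `ψ₁(x) = ∑_{n ≤ x} Λ(n) (x - n)`, the integral of Chebyshev's `ψ` from `0` to `x`. -/
noncomputable def integratedPsi (x : ℝ) : ℝ := ∑ n ∈ Finset.Ioc 0 ⌊x⌋₊, Λ n * (x - n)

/-- The error `ψ₁(x) - (x - 1)² / 2`, cut off to the left of `1`. The main term is the one for which
the Mellin transform of the error involves `riemannZeta₁` only. -/
noncomputable def integratedPsiError : ℝ → ℝ :=
  (Set.Ioi 1).indicator fun x => integratedPsi x - (x - 1) ^ 2 / 2

lemma integratedPsi_eq (x : ℝ) :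
    integratedPsi x = x * Chebyshev.psi x - ∑ n ∈ Finset.Ioc 0 ⌊x⌋₊, Λ n * n := by
  rw [integratedPsi, Chebyshev.psi, Finset.mul_sum, ← Finset.sum_sub_distrib]
  exact Finset.sum_congr rfl fun n _ => by ring

lemma LSeries_vonMangoldt_eq_sub_logDeriv_riemannZeta₁ {s : ℂ} (hs : 1 < s.re) :
    LSeries (fun n => (Λ n : ℂ)) s = 1 / (s - 1) - logDeriv riemannZeta₁ s := by
  have hs₁ : s ≠ 1 := by rintro rfl; simp at hs
  have hζ := riemannZeta_ne_zero_of_one_lt_re hs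
  rw [LSeries_vonMangoldt_eq_deriv_riemannZeta_div hs,
    deriv_riemannZeta_eq_neg_inv_sub_sq_mul_add hs₁, riemannZeta_eq_inv_sub_mul hs₁, logDeriv_apply]
  rw [riemannZeta_eq_inv_sub_mul hs₁] at hζ
  have hζ₁ := right_ne_zero_of_mul hζ
  field_simp [sub_ne_zero.2 hs₁]
  ring

lemma hasMellin_mul_psi {s : ℂ} (hs : 1 < s.re) :
    HasMellin ((Set.Ioi 1).indicator fun t => (t * Chebyshev.psi t : ℂ)) (-s - 1)
      (LSeries (fun n => (Λ n : ℂ)) s / s) := by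
  have h := hasMellin_sum_Ioc_floor (fun _ => vonMangoldt_nonneg) zero_le_one
    (fun x hx => by rw [Real.rpow_one]; exact Chebyshev.psi_le_const_mul_self hx) hs
  have hfun : ((Set.Ioi 1).indicator fun t => (t * Chebyshev.psi t : ℂ)) = fun t : ℝ => (t : ℂ) ^
      (1 : ℂ) • (Set.Ioi 1).indicator (fun t => (Chebyshev.psi t : ℂ)) t := by
    ext t
    rw [Complex.cpow_one, Set.indicator_apply, Set.indicator_apply]
    split_ifs <;> simp
  rw [hfun, HasMellin, MellinConvergent.cpow_smul, mellin_cpow_smul, sub_add_cancel]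
  exact h

lemma sum_Ioc_vonMangoldt_mul_le {x : ℝ} (hx : 0 ≤ x) :
    ∑ n ∈ Finset.Ioc 0 ⌊x⌋₊, Λ n * n ≤ (Real.log 4 + 4) * x ^ (2 : ℝ) := by
  calc ∑ n ∈ Finset.Ioc 0 ⌊x⌋₊, Λ n * n ≤ ∑ n ∈ Finset.Ioc 0 ⌊x⌋₊, Λ n * x := by
        gcongr with n hn
        exact (Nat.le_floor_iff hx).1 (Finset.mem_Ioc.1 hn).2
    _ = Chebyshev.psi x * x := by rw [Chebyshev.psi, Finset.sum_mul]
    _ ≤ (Real.log 4 + 4) * x * x := by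
        gcongr
        exact Chebyshev.psi_le_const_mul_self hx
    _ = _ := by rw [Real.rpow_two]; ring

lemma hasMellin_sum_Ioc_vonMangoldt_mul {s : ℂ} (hs : 1 < s.re) :
    HasMellin ((Set.Ioi 1).indicator fun t => ((∑ n ∈ Finset.Ioc 0 ⌊t⌋₊, Λ n * n : ℝ) : ℂ)) (-s - 1)
      (LSeries (fun n => (Λ n : ℂ)) s / (s + 1)) := by
  have hshift : LSeries (fun n => ((Λ n * n : ℝ) : ℂ)) (s + 1) =
      LSeries (fun n => (Λ n : ℂ)) s := by
    refine tsum_congr fun n => ?_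
    rcases eq_or_ne n 0 with rfl | hn
    · simp
    have hn' : (n : ℂ) ≠ 0 := by exact_mod_cast hn
    rw [LSeries.term_of_ne_zero hn, LSeries.term_of_ne_zero hn, Complex.cpow_add _ _ hn',
      Complex.cpow_one]
    push_cast
    rw [mul_div_mul_right _ _ hn']
  rw [← hshift, ← neg_add']
  exact hasMellin_sum_Ioc_floor (fun n => mul_nonneg vonMangoldt_nonneg n.cast_nonneg) two_pos.le
    (fun x hx => sum_Ioc_vonMangoldt_mul_le hx) (by simp; linarith)

lemma hasMellin_sub_one_sq_div_two {s : ℂ} (hs : 1 < s.re) :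
    HasMellin ((Set.Ioi 1).indicator fun t : ℝ => ((t : ℂ) - 1) ^ 2 / 2) (-s - 1)
      (1 / ((s - 1) * s * (s + 1))) := by
  have hsq := hasMellin_cpow_Ioi 2 (s := -s - 1) (by simp; linarith)
  have hid := hasMellin_cpow_Ioi 1 (s := -s - 1) (by simp; linarith)
  have hone := hasMellin_cpow_Ioi 0 (s := -s - 1) (by simp; linarith)
  have hsq' := hasMellin_const_smul hsq.1 (1 / 2 : ℂ)
  have hone' := hasMellin_const_smul hone.1 (1 / 2 : ℂ)
  have hsub := hasMellin_sub hsq'.1 hid.1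
  have hsum := hasMellin_add hsub.1 hone'.1
  convert hsum using 1
  · ext t
    simp only [Set.indicator_apply]
    split_ifs
    · simp only [Complex.cpow_ofNat, Complex.cpow_one, Complex.cpow_zero, smul_eq_mul]
      ring
    · simp
  · have hne (c : ℂ) (hc : -1 ≤ c.re) : s + c ≠ 0 := fun h => by
      have := congrArg Complex.re h
      simp only [Complex.add_re, Complex.zero_re] at this
      linarith
    have h₀ : s ≠ 0 := by simpa using hne 0 (by simp)
    have h₁ : s - 1 ≠ 0 := by simpa [sub_eq_add_neg] using hne (-1) (by simp)
    have h₂ : s + 1 ≠ 0 := hne 1 (by simp)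
    rw [hsub.2, hsq'.2, hone'.2, hsq.2, hid.2, hone.2, show -s - 1 + 2 = -(s - 1) by ring,
      show -s - 1 + 1 = -s by ring, show -s - 1 + 0 = -(s + 1) by ring, smul_eq_mul, smul_eq_mul]
    field_simp
    ring

/-- The Mellin transform of `integratedPsiError` at `-s - 1`, continued to the left of
`Re s = 1`. -/
noncomputable def psiErrorTransform (s : ℂ) : ℂ := -logDeriv riemannZeta₁ s / (s * (s + 1))

theorem hasMellin_integratedPsiError {s : ℂ} (hs : 1 < s.re) :
    HasMellin (fun t => (integratedPsiError t : ℂ)) (-s - 1) (psiErrorTransform s) := by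
  have hψ := hasMellin_mul_psi hs
  have hmoment := hasMellin_sum_Ioc_vonMangoldt_mul hs
  have hsq := hasMellin_sub_one_sq_div_two hs
  have hψ₁ := hasMellin_sub hψ.1 hmoment.1
  convert hasMellin_sub hψ₁.1 hsq.1 using 1
  · ext t
    simp only [integratedPsiError, Set.indicator_apply]
    split_ifs
    · rw [integratedPsi_eq]
      push_cast
      rfl
    · simp
  · have h₀ : s ≠ 0 := by rintro rfl; simp at hs; linarith
    have h₁ : s - 1 ≠ 0 := sub_ne_zero.2 (by rintro rfl; simp at hs)
    have h₂ : s + 1 ≠ 0 := fun h => by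
      have := congrArg Complex.re h
      simp only [Complex.add_re, Complex.one_re, Complex.zero_re] at this
      linarith
    rw [hψ₁.2, hψ.2, hmoment.2, hsq.2, LSeries_vonMangoldt_eq_sub_logDeriv_riemannZeta₁ hs,
      psiErrorTransform]
    field_simp
    ring

end IntegratedPsi

section ContourShift

variable {E : Type*} [NormedAddCommGroup E] {H : ℂ → E} {a b p C : ℝ}

lemma verticalIntegrable_of_norm_le (hp : 1 < p) (hH : ∀ s : ℂ, s.re = a → ContinuousAt H s)
    (hbound : ∀ s : ℂ, s.re = a → ‖H s‖ ≤ C * (1 + |s.im|) ^ (-p)) :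
    Complex.VerticalIntegrable H a := by
  have hdom : Integrable fun y : ℝ => C * (1 + ‖y‖) ^ (-p) :=
    (integrable_one_add_norm (by simpa using hp)).const_mul C
  refine hdom.mono' (Continuous.aestronglyMeasurable ?_) (.of_forall fun y => ?_)
  · refine continuous_iff_continuousAt.2 fun y => ?_
    exact ContinuousAt.comp (f := fun y : ℝ => (a + y * Complex.I : ℂ)) (hH _ (by simp))
      (by fun_prop)
  · simpa using hbound (a + y * Complex.I) (by simp)

variable [NormedSpace ℂ E]

lemma tendsto_horizontal_integral_zero {l : Filter ℝ} (hp : 0 < p) (hab : a ≤ b)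
    (hl : Tendsto (fun T : ℝ => |T|) l atTop)
    (hbound : ∀ s : ℂ, a ≤ s.re → s.re ≤ b → ‖H s‖ ≤ C * (1 + |s.im|) ^ (-p)) :
    Tendsto (fun T : ℝ => ∫ x in a..b, H (x + T * Complex.I)) l (𝓝 0) := by
  have hzero : Tendsto (fun T : ℝ => C * (1 + |T|) ^ (-p) * |b - a|) l (𝓝 0) := by
    have := (tendsto_rpow_neg_atTop hp).comp (tendsto_atTop_add_const_left l 1 hl)
    simpa using (this.const_mul C).mul_const |b - a|
  refine squeeze_zero_norm (fun T => ?_) hzero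
  refine intervalIntegral.norm_integral_le_of_norm_le_const fun x hx => ?_
  rw [Set.uIoc_of_le hab] at hx
  simpa using hbound (x + T * Complex.I) (by simpa using hx.1.le) (by simpa using hx.2)

theorem integral_vertical_eq_integral_vertical [CompleteSpace E] (hp : 1 < p) (hab : a ≤ b)
    (hH : ∀ s : ℂ, a ≤ s.re → s.re ≤ b → DifferentiableAt ℂ H s)
    (hbound : ∀ s : ℂ, a ≤ s.re → s.re ≤ b → ‖H s‖ ≤ C * (1 + |s.im|) ^ (-p)) :
    ∫ y : ℝ, H (a + y * Complex.I) = ∫ y : ℝ, H (b + y * Complex.I) := by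
  have hleft : Complex.VerticalIntegrable H a := verticalIntegrable_of_norm_le hp
    (fun s hs => (hH s hs.ge (hs.le.trans hab)).continuousAt)
    (fun s hs => hbound s hs.ge (hs.le.trans hab))
  have hright : Complex.VerticalIntegrable H b := verticalIntegrable_of_norm_le hp
    (fun s hs => (hH s (hab.trans hs.ge) hs.le).continuousAt)
    (fun s hs => hbound s (hab.trans hs.ge) hs.le)
  have htop := tendsto_horizontal_integral_zero (l := atTop) (by linarith) hab
    tendsto_abs_atTop_atTop hbound
  have hbot := (tendsto_horizontal_integral_zero (l := atBot) (by linarith) hab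
    tendsto_abs_atBot_atTop hbound).comp tendsto_neg_atTop_atBot
  have hlim := (hbot.sub htop).add
    (((intervalIntegral_tendsto_integral hright tendsto_neg_atTop_atBot tendsto_id).sub
      (intervalIntegral_tendsto_integral hleft tendsto_neg_atTop_atBot tendsto_id)).const_smul
        Complex.I)
  have hcauchy (T : ℝ) : (∫ x in a..b, H (x + (-T : ℝ) * Complex.I))
      - (∫ x in a..b, H (x + T * Complex.I))
      + Complex.I • ((∫ y in (-T)..T, H (b + y * Complex.I))
        - ∫ y in (-T)..T, H (a + y * Complex.I)) = 0 := by
    have hdiff : DifferentiableOn ℂ H (Set.uIcc a b ×ℂ Set.uIcc (-T) T) := by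
      intro s hs
      have hre := hs.1
      rw [Set.mem_preimage, Set.uIcc_of_le hab] at hre
      exact (hH s hre.1 hre.2).differentiableWithinAt
    have := Complex.integral_boundary_rect_eq_zero_of_differentiableOn H
      (a + (-T : ℝ) * Complex.I) (b + T * Complex.I) (by simpa using hdiff)
    rw [smul_sub, ← add_sub_assoc]
    simpa using this
  have hzero := tendsto_nhds_unique (hlim.congr hcauchy) tendsto_const_nhds
  rw [sub_zero, zero_add, smul_eq_zero_iff_right Complex.I_ne_zero, sub_eq_zero] at hzero
  exact hzero.symm

end ContourShift

section PerronFormula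

lemma mul_one_add_abs_im_le_norm {a : ℝ} {s : ℂ} (ha : 0 < a) (hs : a ≤ s.re) :
    a / (1 + a) * (1 + |s.im|) ≤ ‖s‖ := by
  have hre : a ≤ ‖s‖ := (hs.trans (le_abs_self _)).trans (Complex.abs_re_le_norm s)
  have him := mul_le_mul_of_nonneg_left (Complex.abs_im_le_norm s) ha.le
  rw [div_mul_eq_mul_div, div_le_iff₀ (by positivity)]
  linarith

variable {Θ a ε : ℝ}

lemma differentiableAt_psiErrorTransform {s : ℂ} (hζ : ∀ s : ℂ, riemannZeta s = 0 → s.re ≤ Θ)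
    (hΘ : 0 ≤ Θ) (hs : Θ < s.re) : DifferentiableAt ℂ psiErrorTransform s := by
  have h₀ : s ≠ 0 := by rintro rfl; exact hs.not_ge hΘ
  have h₁ : s + 1 ≠ 0 := fun h => by
    have := congrArg Complex.re h
    simp only [Complex.add_re, Complex.one_re, Complex.zero_re] at this
    linarith
  have hderiv : DifferentiableAt ℂ (deriv riemannZeta₁) s :=
    (differentiable_riemannZeta₁.contDiff (n := 2)).differentiable_deriv_two s
  exact (hderiv.div (differentiable_riemannZeta₁ s)
    (riemannZeta₁_ne_zero_of_lt_re hζ hs)).neg.div (by fun_prop) (mul_ne_zero h₀ h₁)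

lemma exists_norm_psiErrorTransform_le (hζ : ∀ s : ℂ, riemannZeta s = 0 → s.re ≤ Θ) (hΘ : 0 ≤ Θ)
    (ha : Θ < a) (hε : 0 < ε) : ∃ K, 0 < K ∧ ∀ s : ℂ, a ≤ s.re → s.re ≤ 2 →
      ‖psiErrorTransform s‖ ≤ K * (1 + |s.im|) ^ (-(2 - ε)) := by
  obtain ⟨K, hK, hbound⟩ := exists_norm_logDeriv_riemannZeta₁_le hζ hΘ ha hε
  have ha₀ : 0 < a := hΘ.trans_lt ha
  refine ⟨K / (a / (1 + a) * (1 / 2)), by positivity, fun s hs hs' => ?_⟩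
  have h₀ := mul_one_add_abs_im_le_norm ha₀ hs
  have h₁ : 1 / 2 * (1 + |s.im|) ≤ ‖s + 1‖ := by
    have := mul_one_add_abs_im_le_norm (a := 1) (s := s + 1) one_pos (by simp; linarith)
    norm_num at this ⊢
    exact this
  have hy : 0 < 1 + |s.im| := by positivity
  rw [psiErrorTransform, norm_div, norm_neg, norm_mul]
  calc ‖logDeriv riemannZeta₁ s‖ / (‖s‖ * ‖s + 1‖)
      ≤ K * (1 + |s.im|) ^ ε / (a / (1 + a) * (1 + |s.im|) * (1 / 2 * (1 + |s.im|))) := by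
        gcongr
        exact hbound s hs hs'
    _ = K / (a / (1 + a) * (1 / 2)) * (1 + |s.im|) ^ (-(2 - ε)) := by
        rw [neg_sub, Real.rpow_sub hy, Real.rpow_two]
        field_simp

lemma continuousAt_integratedPsi {x : ℝ} (hx : 0 < x) : ContinuousAt integratedPsi x := by
  set N := ⌊x⌋₊ + 1
  have hxN : x < N := by exact_mod_cast Nat.lt_floor_add_one x
  have hloc : integratedPsi =ᶠ[𝓝 x] fun y => ∑ n ∈ Finset.Ioc 0 N, Λ n * max (y - n) 0 := by
    filter_upwards [Ioo_mem_nhds hx hxN] with y ⟨hy, hyN⟩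
    have hsub : Finset.Ioc 0 ⌊y⌋₊ ⊆ Finset.Ioc 0 N :=
      Finset.Ioc_subset_Ioc_right ((Nat.floor_lt hy.le).2 hyN).le
    rw [integratedPsi, ← Finset.sum_subset hsub]
    · refine Finset.sum_congr rfl fun n hn => ?_
      have := (Nat.le_floor_iff hy.le).1 (Finset.mem_Ioc.1 hn).2
      rw [max_eq_left (sub_nonneg.2 this)]
    · intro n hnN hn
      have : y < n := (Nat.floor_lt hy.le).1
        (not_le.1 fun h => hn (Finset.mem_Ioc.2 ⟨(Finset.mem_Ioc.1 hnN).1, h⟩))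
      rw [max_eq_right (sub_nonpos.2 this.le), mul_zero]
  rw [continuousAt_congr hloc]
  fun_prop

lemma integratedPsiError_of_one_lt {x : ℝ} (hx : 1 < x) :
    integratedPsiError x = integratedPsi x - (x - 1) ^ 2 / 2 :=
  Set.indicator_of_mem (Set.mem_Ioi.2 hx) _

lemma continuousAt_integratedPsiError {x : ℝ} (hx : 1 < x) :
    ContinuousAt integratedPsiError x := by
  have hloc : integratedPsiError =ᶠ[𝓝 x] fun y => integratedPsi y - (y - 1) ^ 2 / 2 := by
    filter_upwards [Ioi_mem_nhds hx] with y hy using integratedPsiError_of_one_lt hy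
  rw [continuousAt_congr hloc]
  exact (continuousAt_integratedPsi (zero_lt_one.trans hx)).sub (by fun_prop)

lemma integratedPsiError_eq_integral_re_two {x : ℝ} (hx : 1 < x)
    (hint : Complex.VerticalIntegrable psiErrorTransform 2) :
    (integratedPsiError x : ℂ) = (1 / (2 * Real.pi) : ℂ) *
      ∫ y : ℝ, (x : ℂ) ^ (((2 : ℝ) : ℂ) + y * Complex.I + 1)
        * psiErrorTransform (((2 : ℝ) : ℂ) + y * Complex.I) := by
  have hmellin (y : ℝ) :
      mellin (fun t => (integratedPsiError t : ℂ)) (((-3 : ℝ) : ℂ) + y * Complex.I)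
        = psiErrorTransform (((2 : ℝ) : ℂ) + (-y : ℝ) * Complex.I) := by
    rw [← (hasMellin_integratedPsiError (s := ((2 : ℝ) : ℂ) + (-y : ℝ) * Complex.I) (by simp)).2]
    congr 1
    push_cast
    ring
  have hconv : MellinConvergent (fun t => (integratedPsiError t : ℂ)) ((-3 : ℝ) : ℂ) := by
    convert (hasMellin_integratedPsiError (s := 2) (by simp)).1 using 1
    push_cast
    ring
  have hvert : Complex.VerticalIntegrable (mellin fun t => (integratedPsiError t : ℂ)) (-3) := by
    simp_rw [Complex.VerticalIntegrable, hmellin]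
    exact Integrable.comp_neg hint
  rw [← mellinInv_mellin_eq (-3) (fun t => (integratedPsiError t : ℂ)) (zero_lt_one.trans hx) hconv
    hvert (Complex.continuous_ofReal.continuousAt.comp (continuousAt_integratedPsiError hx)),
    mellinInv, Complex.real_smul, ← integral_neg_eq_self]
  push_cast
  congr 2 with y
  have hexp : -(-3 + -(y : ℂ) * Complex.I) = 2 + y * Complex.I + 1 := by ring
  have hmellin' := hmellin (-y)
  push_cast at hmellin'
  rw [hmellin', neg_neg, hexp, smul_eq_mul]

theorem integrable_and_integratedPsiError_eq_integral {x : ℝ}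
    (hζ : ∀ s : ℂ, riemannZeta s = 0 → s.re ≤ Θ) (hΘ : 0 ≤ Θ) (ha : Θ < a) (ha₂ : a ≤ 2)
    (hx : 1 < x) :
    Complex.VerticalIntegrable (fun s => (x : ℂ) ^ (s + 1) * psiErrorTransform s) a ∧
    (integratedPsiError x : ℂ) = (1 / (2 * Real.pi) : ℂ) *
      ∫ y : ℝ, (x : ℂ) ^ (a + y * Complex.I + 1) * psiErrorTransform (a + y * Complex.I) := by
  obtain ⟨K, -, hbound⟩ := exists_norm_psiErrorTransform_le hζ hΘ ha (ε := 1 / 2) (by norm_num)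
  have hx₀ : 0 < x := zero_lt_one.trans hx
  have hdiff (s : ℂ) (hs : a ≤ s.re) : DifferentiableAt ℂ psiErrorTransform s :=
    differentiableAt_psiErrorTransform hζ hΘ (ha.trans_le hs)
  have hdiff' (s : ℂ) (hs : a ≤ s.re) (_ : s.re ≤ 2) :
      DifferentiableAt ℂ (fun s => (x : ℂ) ^ (s + 1) * psiErrorTransform s) s :=
    (DifferentiableAt.const_cpow (by fun_prop)
      (.inl (by exact_mod_cast hx₀.ne'))).mul (hdiff s hs)
  have hbound' (s : ℂ) (hs : a ≤ s.re) (hs' : s.re ≤ 2) :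
      ‖(x : ℂ) ^ (s + 1) * psiErrorTransform s‖
        ≤ x ^ (3 : ℝ) * K * (1 + |s.im|) ^ (-(2 - 1 / 2) : ℝ) := by
    rw [norm_mul, Complex.norm_cpow_eq_rpow_re_of_pos hx₀, mul_assoc]
    gcongr
    · exact hx.le
    · simp; linarith
    · exact hbound s hs hs'
  refine ⟨verticalIntegrable_of_norm_le (by norm_num)
    (fun s hs => (hdiff' s hs.ge (by linarith)).continuousAt)
    (fun s hs => hbound' s hs.ge (by linarith)), ?_⟩
  have htwo : Complex.VerticalIntegrable psiErrorTransform 2 :=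
    verticalIntegrable_of_norm_le (by norm_num)
      (fun s hs => (hdiff s (by linarith)).continuousAt)
      (fun s hs => hbound s (by linarith) hs.le)
  rw [integratedPsiError_eq_integral_re_two hx htwo,
    integral_vertical_eq_integral_vertical (by norm_num) ha₂ hdiff' hbound']

end PerronFormula

section IntegratedPsiIncrement

variable {Θ a δ u v : ℝ}

lemma le_rpow_mul_rpow_of_le {Q A B : ℝ} (hQ : 0 ≤ Q) (hA : Q ≤ A) (hB : Q ≤ B) (hδ₀ : 0 ≤ δ)
    (hδ₁ : δ ≤ 1) : Q ≤ A ^ (1 - δ) * B ^ δ :=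
  calc Q = Q ^ (1 - δ) * Q ^ δ := by
        rw [← Real.rpow_add_of_nonneg hQ (by linarith) hδ₀, sub_add_cancel, Real.rpow_one]
    _ ≤ A ^ (1 - δ) * B ^ δ := by
        have hA₀ : 0 ≤ A := hQ.trans hA
        have := sub_nonneg.2 hδ₁
        gcongr

lemma norm_cpow_add_one_sub_cpow_add_one_le {s : ℂ} (hu : 0 < u) (huv : u ≤ v) (hs₀ : 0 ≤ s.re)
    (hs₁ : s.re ≤ 2) (hδ₀ : 0 ≤ δ) (hδ₁ : δ ≤ 1) :
    ‖(v : ℂ) ^ (s + 1) - (u : ℂ) ^ (s + 1)‖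
      ≤ 3 * (1 + |s.im|) ^ (1 - δ) * ((v - u) ^ (1 - δ) * v ^ (s.re + δ)) := by
  have hv : 0 < v := hu.trans_le huv
  have hvu : 0 ≤ v - u := sub_nonneg.2 huv
  have hnorm : ‖s + 1‖ ≤ 3 * (1 + |s.im|) := by
    have := Complex.norm_le_abs_re_add_abs_im (s + 1)
    simp only [Complex.add_re, Complex.one_re, Complex.add_im, Complex.one_im, add_zero] at this
    rw [abs_of_nonneg (by linarith)] at this
    linarith [abs_nonneg s.im]
  have hlip : ‖(v : ℂ) ^ (s + 1) - (u : ℂ) ^ (s + 1)‖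
      ≤ 3 * ((1 + |s.im|) * (v - u) * v ^ s.re) := by
    refine (norm_ofReal_cpow_sub_ofReal_cpow_le (M := v ^ s.re) hu huv fun t ht => ?_).trans ?_
    · simpa using Real.rpow_le_rpow (hu.le.trans ht.1) ht.2.le hs₀
    · calc ‖s + 1‖ * v ^ s.re * (v - u) ≤ 3 * (1 + |s.im|) * v ^ s.re * (v - u) := by gcongr
        _ = _ := by ring
  have htriv : ‖(v : ℂ) ^ (s + 1) - (u : ℂ) ^ (s + 1)‖ ≤ 3 * v ^ (s.re + 1) := by
    refine (norm_sub_le _ _).trans ?_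
    rw [Complex.norm_cpow_eq_rpow_re_of_pos hv, Complex.norm_cpow_eq_rpow_re_of_pos hu,
      Complex.add_re, Complex.one_re]
    have := Real.rpow_le_rpow hu.le huv (show 0 ≤ s.re + 1 by linarith)
    linarith [Real.rpow_nonneg hv.le (s.re + 1)]
  refine (le_rpow_mul_rpow_of_le (norm_nonneg _) hlip htriv hδ₀ hδ₁).trans_eq ?_
  rw [Real.mul_rpow (by norm_num) (by positivity), Real.mul_rpow (by positivity) (by positivity),
    Real.mul_rpow (by positivity) hvu, Real.mul_rpow (by norm_num) (by positivity),
    ← Real.rpow_mul hv.le, ← Real.rpow_mul hv.le]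
  have hthree : (3 : ℝ) ^ (1 - δ) * 3 ^ δ = 3 := by rw [← Real.rpow_add (by norm_num)]; norm_num
  have hpow : v ^ (s.re * (1 - δ)) * v ^ ((s.re + 1) * δ) = v ^ (s.re + δ) := by
    rw [← Real.rpow_add hv]
    ring_nf
  rw [← hpow]
  linear_combination (1 + |s.im|) ^ (1 - δ) * (v - u) ^ (1 - δ) * v ^ (s.re * (1 - δ)) *
    v ^ ((s.re + 1) * δ) * hthree

lemma norm_cpow_mul_sub_cpow_mul_le {s z : ℂ} {K : ℝ} (hu : 0 < u) (huv : u ≤ v)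
    (hs₀ : 0 ≤ s.re) (hs₁ : s.re ≤ 2) (hδ₀ : 0 ≤ δ) (hδ₁ : δ ≤ 1)
    (hz : ‖z‖ ≤ K * (1 + |s.im|) ^ (-(2 - δ / 2))) :
    ‖(v : ℂ) ^ (s + 1) * z - (u : ℂ) ^ (s + 1) * z‖
      ≤ 3 * K * ((v - u) ^ (1 - δ) * v ^ (s.re + δ)) * (1 + |s.im|) ^ (-(1 + δ / 2)) := by
  have hW : 0 ≤ (v - u) ^ (1 - δ) * v ^ (s.re + δ) :=
    mul_nonneg (Real.rpow_nonneg (sub_nonneg.2 huv) _) (Real.rpow_nonneg (hu.le.trans huv) _)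
  have hpow : (1 + |s.im|) ^ (-(1 + δ / 2))
      = (1 + |s.im|) ^ (1 - δ) * (1 + |s.im|) ^ (-(2 - δ / 2)) := by
    rw [← Real.rpow_add (by positivity)]
    ring_nf
  rw [← sub_mul, norm_mul, hpow]
  calc _ ≤ 3 * (1 + |s.im|) ^ (1 - δ) * ((v - u) ^ (1 - δ) * v ^ (s.re + δ))
        * (K * (1 + |s.im|) ^ (-(2 - δ / 2))) := by
        gcongr
        exact norm_cpow_add_one_sub_cpow_add_one_le hu huv hs₀ hs₁ hδ₀ hδ₁
    _ = _ := by ring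

theorem exists_abs_integratedPsiError_sub_le (hζ : ∀ s : ℂ, riemannZeta s = 0 → s.re ≤ Θ)
    (hΘ : 0 ≤ Θ) (ha : Θ < a) (ha₂ : a ≤ 2) (hδ₀ : 0 < δ) (hδ₁ : δ ≤ 1) :
    ∃ K, 0 ≤ K ∧ ∀ u v : ℝ, 1 < u → u ≤ v →
      |integratedPsiError v - integratedPsiError u| ≤ K * ((v - u) ^ (1 - δ) * v ^ (a + δ)) := by
  obtain ⟨K, hK, hbound⟩ := exists_norm_psiErrorTransform_le hζ hΘ ha (half_pos hδ₀)
  have hdom : Integrable fun y : ℝ => (1 + ‖y‖) ^ (-(1 + δ / 2)) :=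
    integrable_one_add_norm (by simpa using by linarith)
  refine ⟨3 * K * ∫ y : ℝ, (1 + ‖y‖) ^ (-(1 + δ / 2)), by positivity, fun u v hu huv => ?_⟩
  obtain ⟨hint_u, hu_eq⟩ := integrable_and_integratedPsiError_eq_integral hζ hΘ ha ha₂ hu
  obtain ⟨hint_v, hv_eq⟩ :=
    integrable_and_integratedPsiError_eq_integral hζ hΘ ha ha₂ (hu.trans_le huv)
  set W := (v - u) ^ (1 - δ) * v ^ (a + δ)
  have hintegrand (y : ℝ) :
      ‖(v : ℂ) ^ (a + y * Complex.I + 1) * psiErrorTransform (a + y * Complex.I)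
        - (u : ℂ) ^ (a + y * Complex.I + 1) * psiErrorTransform (a + y * Complex.I)‖
      ≤ 3 * K * W * (1 + ‖y‖) ^ (-(1 + δ / 2)) := by
    have ha₀ := hΘ.trans ha.le
    simpa using norm_cpow_mul_sub_cpow_mul_le (s := a + y * Complex.I) (zero_lt_one.trans hu) huv
      (by simpa using ha₀) (by simpa using ha₂) hδ₀.le hδ₁
      (hbound _ (by simp) (by simpa using ha₂))
  have hpi : ‖(1 / (2 * Real.pi) : ℂ)‖ ≤ 1 := by
    have : 1 ≤ 2 * Real.pi := by linarith [Real.pi_gt_three]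
    rw [norm_div, norm_mul, norm_one, Complex.norm_ofNat, Complex.norm_real,
      Real.norm_of_nonneg Real.pi_nonneg]
    exact (div_le_one (by positivity)).2 this
  rw [← Real.norm_eq_abs, ← Complex.norm_real, Complex.ofReal_sub, hv_eq, hu_eq, ← mul_sub,
    ← integral_sub hint_v hint_u, norm_mul]
  calc _ ≤ 1 * ∫ y : ℝ, 3 * K * W * (1 + ‖y‖) ^ (-(1 + δ / 2)) := by
        gcongr
        exact norm_integral_le_of_norm_le (hdom.const_mul _) (.of_forall hintegrand)
    _ = _ := by rw [integral_const_mul]; ring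

end IntegratedPsiIncrement

section ChebyshevFunctions

lemma sub_mul_psi_le_integratedPsi_sub {a b : ℝ} (hb : 0 ≤ b) (hab : a ≤ b) :
    (b - a) * Chebyshev.psi a ≤ integratedPsi b - integratedPsi a := by
  have hle : ∑ n ∈ Finset.Ioc 0 ⌊a⌋₊, Λ n * (b - n) ≤ integratedPsi b := by
    refine Finset.sum_le_sum_of_subset_of_nonneg
      (Finset.Ioc_subset_Ioc_right (Nat.floor_le_floor hab)) fun n hn _ => ?_
    have := (Nat.le_floor_iff hb).1 (Finset.mem_Ioc.1 hn).2
    exact mul_nonneg vonMangoldt_nonneg (sub_nonneg.2 this)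
  have heq : (b - a) * Chebyshev.psi a
      = ∑ n ∈ Finset.Ioc 0 ⌊a⌋₊, Λ n * (b - n) - integratedPsi a := by
    rw [Chebyshev.psi, integratedPsi, ← Finset.sum_sub_distrib, Finset.mul_sum]
    exact Finset.sum_congr rfl fun n _ => by ring
  linarith

lemma integratedPsi_sub_le_sub_mul_psi {a b : ℝ} (ha : 0 ≤ a) (hab : a ≤ b) :
    integratedPsi b - integratedPsi a ≤ (b - a) * Chebyshev.psi b := by
  have hle : ∑ n ∈ Finset.Ioc 0 ⌊b⌋₊, Λ n * (a - n) ≤ integratedPsi a := by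
    rw [integratedPsi,
      ← Finset.sum_sdiff (Finset.Ioc_subset_Ioc_right (Nat.floor_le_floor hab)),
      add_le_iff_nonpos_left]
    refine Finset.sum_nonpos fun n hn => ?_
    obtain ⟨hnb, hna⟩ := Finset.mem_sdiff.1 hn
    have : a < n := (Nat.floor_lt ha).1
      (not_le.1 fun h => hna (Finset.mem_Ioc.2 ⟨(Finset.mem_Ioc.1 hnb).1, h⟩))
    exact mul_nonpos_of_nonneg_of_nonpos vonMangoldt_nonneg (sub_nonpos.2 this.le)
  have heq : (b - a) * Chebyshev.psi b
      = integratedPsi b - ∑ n ∈ Finset.Ioc 0 ⌊b⌋₊, Λ n * (a - n) := by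
    rw [Chebyshev.psi, integratedPsi, ← Finset.sum_sub_distrib, Finset.mul_sum]
    exact Finset.sum_congr rfl fun n _ => by ring
  linarith

lemma abs_psi_sub_le_of_abs_integratedPsiError_sub_le {x h E : ℝ} (hh : 0 < h) (hx : 1 < x - h)
    (hright : |integratedPsiError (x + h) - integratedPsiError x| ≤ h * E)
    (hleft : |integratedPsiError x - integratedPsiError (x - h)| ≤ h * E) :
    |Chebyshev.psi x - x| ≤ E + 1 + h / 2 := by
  have hupper := sub_mul_psi_le_integratedPsi_sub (a := x) (b := x + h) (by linarith) (by linarith)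
  have hlower := integratedPsi_sub_le_sub_mul_psi (a := x - h) (b := x) (by linarith) (by linarith)
  rw [integratedPsiError_of_one_lt (by linarith), integratedPsiError_of_one_lt (by linarith),
    abs_le] at hright hleft
  rw [abs_le]
  constructor <;> refine le_of_mul_le_mul_left ?_ hh <;> linarith

variable {Θ e : ℝ}

theorem exists_abs_psi_sub_le (hζ : ∀ s : ℂ, riemannZeta s = 0 → s.re ≤ Θ) (hΘ : 0 ≤ Θ)
    (he : Θ < e) (he₁ : e ≤ 1) :
    ∃ K, 0 ≤ K ∧ ∀ x : ℝ, 2 < x → |Chebyshev.psi x - x| ≤ K * x ^ e := by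
  set δ := (e - Θ) / 2 with hδ
  obtain ⟨K, hK, hincrement⟩ := exists_abs_integratedPsiError_sub_le (a := (Θ + e) / 2) (δ := δ)
    hζ hΘ (by linarith) (by linarith) (by linarith) (by linarith)
  refine ⟨4 * K + 2, by positivity, fun x hx => ?_⟩
  have hx₀ : 0 < x := by linarith
  have hpow₁ : 1 ≤ x ^ e := Real.one_le_rpow (by linarith) (by linarith)
  have hpow_le : x ^ e ≤ x := Real.rpow_le_self_of_one_le (by linarith) he₁
  have hstep (v : ℝ) (hv₀ : 0 < v) (hv : v ≤ 2 * x) :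
      K * ((x ^ e / 2) ^ (1 - δ) * v ^ ((Θ + e) / 2 + δ)) ≤ x ^ e / 2 * (4 * K * x ^ e) := by
    have hδ₁ : 0 ≤ 1 - δ := by linarith
    have hh : (x ^ e / 2) ^ (1 - δ) ≤ x ^ e :=
      calc (x ^ e / 2) ^ (1 - δ) ≤ (x ^ e) ^ (1 - δ) := by gcongr; linarith
        _ ≤ x ^ e := Real.rpow_le_self_of_one_le hpow₁ (by linarith)
    have hve : v ^ e ≤ 2 * x ^ e :=
      calc v ^ e ≤ (2 * x) ^ e := Real.rpow_le_rpow hv₀.le hv (by linarith)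
        _ = 2 ^ e * x ^ e := Real.mul_rpow (by norm_num) hx₀.le
        _ ≤ 2 * x ^ e := by gcongr; exact Real.rpow_le_self_of_one_le (by norm_num) he₁
    rw [show (Θ + e) / 2 + δ = e by rw [hδ]; ring]
    calc K * ((x ^ e / 2) ^ (1 - δ) * v ^ e) ≤ K * (x ^ e * (2 * x ^ e)) := by gcongr
      _ = x ^ e / 2 * (4 * K * x ^ e) := by ring
  have hright := hincrement x (x + x ^ e / 2) (by linarith) (by linarith)
  have hleft := hincrement (x - x ^ e / 2) x (by linarith) (by linarith)
  rw [add_sub_cancel_left] at hright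
  rw [sub_sub_cancel] at hleft
  have := abs_psi_sub_le_of_abs_integratedPsiError_sub_le (by positivity) (by linarith)
    (hright.trans (hstep _ (by linarith) (by linarith)))
    (hleft.trans (hstep _ hx₀ (by linarith)))
  linarith

theorem exists_abs_theta_sub_le (hζ : ∀ s : ℂ, riemannZeta s = 0 → s.re ≤ Θ) (hΘ : 0 ≤ Θ)
    (he : Θ < e) (he₀ : 1 / 2 ≤ e) (he₁ : e ≤ 1) :
    ∃ K, ∀ x : ℝ, 0 < x → |Chebyshev.theta x - x| ≤ K * x ^ e := by
  obtain ⟨K, hK, hψ⟩ := exists_abs_psi_sub_le hζ hΘ he he₁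
  obtain ⟨C, hC⟩ := Chebyshev.psi_sub_theta_le_mul_sqrt
  refine ⟨K + |C| + 2, fun x hx₀ => ?_⟩
  have hpow : 0 < x ^ e := by positivity
  rcases lt_or_ge 2 x with hx | hx
  · have hsqrt : C * √x ≤ |C| * x ^ e := by
      rw [Real.sqrt_eq_rpow]
      gcongr
      · exact le_abs_self C
      · linarith
    have hψx := abs_le.1 (hψ x hx)
    have hpsi_sub := hC x
    have hle := Chebyshev.theta_le_psi x
    rw [abs_le]
    constructor <;> linarith
  · have hx_le : x ≤ 2 * x ^ e :=
      calc x = x ^ (1 - e) * x ^ e := by rw [← Real.rpow_add hx₀]; simp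
        _ ≤ 2 * x ^ e := by
          gcongr
          calc x ^ (1 - e) ≤ 2 ^ (1 - e) := Real.rpow_le_rpow hx₀.le hx (by linarith)
            _ ≤ 2 := Real.rpow_le_self_of_one_le (by norm_num) (by linarith)
    have hnonneg := Chebyshev.theta_nonneg x
    have hle := Chebyshev.theta_le_log4_mul_x hx₀.le
    have hlog : Real.log 4 ≤ 2 := by
      rw [show (4 : ℝ) = 2 ^ 2 by norm_num, Real.log_pow]
      norm_num
      linarith [Real.log_two_lt_d9]
    have hCK : 0 ≤ (K + |C|) * x ^ e := by positivity
    rw [abs_le]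
    constructor <;> nlinarith

end ChebyshevFunctions

section Mertens

variable {a b e K : ℝ}

/-- The primes in the real interval `(a, b]`, for nonnegative endpoints. -/
noncomputable def primesIoc (a b : ℝ) : Finset ℕ := {p ∈ Finset.Ioc ⌊a⌋₊ ⌊b⌋₊ | p.Prime}

lemma mem_primesIoc (ha : 0 ≤ a) (hb : 0 ≤ b) {n : ℕ} :
    n ∈ primesIoc a b ↔ a < n ∧ (n : ℝ) ≤ b ∧ n.Prime := by
  rw [primesIoc, Finset.mem_filter, Finset.mem_Ioc, Nat.floor_lt ha, Nat.le_floor_iff hb, and_assoc]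

lemma card_primesIoc_le (hb : 0 ≤ b) : ((primesIoc a b).card : ℝ) ≤ b :=
  calc ((primesIoc a b).card : ℝ) ≤ ⌊b⌋₊ := by
        refine Nat.cast_le.2 ((Finset.card_filter_le _ _).trans ?_)
        rw [Nat.card_Ioc]
        exact Nat.sub_le _ _
    _ ≤ b := Nat.floor_le hb

lemma sum_primesIoc_log (hab : a ≤ b) :
    ∑ q ∈ primesIoc a b, Real.log q = Chebyshev.theta b - Chebyshev.theta a := by
  rw [eq_sub_iff_add_eq', Chebyshev.theta, Chebyshev.theta, primesIoc, Finset.sum_filter,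
    Finset.sum_filter, Finset.sum_filter]
  exact Finset.sum_Ioc_consecutive _ (Nat.zero_le _) (Nat.floor_le_floor hab)

lemma one_le_of_abs_theta_sub_le
    (hθ : ∀ x : ℝ, 0 < x → |Chebyshev.theta x - x| ≤ K * x ^ e) : 1 ≤ K := by
  simpa using hθ 1 one_pos

lemma intervalIntegrable_theta_div_sq (ha : 0 < a) (hab : a ≤ b) :
    IntervalIntegrable (fun t => Chebyshev.theta t / t ^ 2) volume a b := by
  have hcont : ContinuousOn (fun t : ℝ => (t ^ 2)⁻¹) (Set.uIcc a b) := by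
    rw [Set.uIcc_of_le hab]
    exact ContinuousOn.inv₀ (by fun_prop) fun t ht => (pow_pos (ha.trans_le ht.1) 2).ne'
  exact (Chebyshev.theta_mono.intervalIntegrable (a := a) (b := b)).mul_continuousOn hcont

lemma sum_primesIoc_log_div_eq (ha : 0 < a) (hab : a ≤ b) :
    ∑ p ∈ primesIoc a b, Real.log p / p = Chebyshev.theta b / b - Chebyshev.theta a / a
      + ∫ t in a..b, Chebyshev.theta t / t ^ 2 := by
  have hθ (t : ℝ) : ∑ k ∈ Finset.Icc 0 ⌊t⌋₊, (if k.Prime then Real.log k else 0)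
      = Chebyshev.theta t := by
    rw [Chebyshev.theta_eq_sum_Icc, Finset.sum_filter]
  have hderiv : deriv (fun x : ℝ => x⁻¹) = fun t : ℝ => -(t ^ 2)⁻¹ := by ext t; simp
  have hcont : ContinuousOn (deriv fun x : ℝ => x⁻¹) (Set.Icc a b) := by
    rw [hderiv]
    exact (ContinuousOn.inv₀ (by fun_prop) fun t ht => (pow_pos (ha.trans_le ht.1) 2).ne').neg
  have hsum := sum_mul_eq_sub_sub_integral_mul (f := fun x : ℝ => x⁻¹)
    (fun k : ℕ => (if k.Prime then Real.log k else 0 : ℝ)) ha.le hab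
    (fun t ht => differentiableAt_inv (ha.trans_le ht.1).ne') hcont.integrableOn_Icc
  simp only [hθ, hderiv] at hsum
  rw [← intervalIntegral.integral_of_le hab] at hsum
  have hlhs : ∑ p ∈ primesIoc a b, Real.log p / p
      = ∑ k ∈ Finset.Ioc ⌊a⌋₊ ⌊b⌋₊, (k : ℝ)⁻¹ * (if k.Prime then Real.log k else 0) := by
    rw [primesIoc, Finset.sum_filter]
    refine Finset.sum_congr rfl fun k _ => ?_
    split_ifs <;> simp [div_eq_inv_mul]
  simp_rw [hlhs, hsum, neg_mul, intervalIntegral.integral_neg, sub_neg_eq_add, inv_mul_eq_div]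

lemma abs_integral_theta_div_sq_sub_log_le (he : e < 1)
    (hθ : ∀ x : ℝ, 0 < x → |Chebyshev.theta x - x| ≤ K * x ^ e) (ha : 0 < a) (hab : a ≤ b) :
    |(∫ t in a..b, Chebyshev.theta t / t ^ 2) - Real.log (b / a)|
      ≤ K / (1 - e) * a ^ (e - 1) := by
  have hK : 1 ≤ K := one_le_of_abs_theta_sub_le hθ
  have h₀ : (0 : ℝ) ∉ Set.uIcc a b := by
    rw [Set.uIcc_of_le hab]
    exact fun h => h.1.not_gt ha
  have hinv : IntervalIntegrable (fun t : ℝ => t⁻¹) volume a b := by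
    simpa using intervalIntegral.intervalIntegrable_inv (μ := volume)
      (fun t ht h => h₀ (h ▸ ht)) (continuousOn_id (s := Set.uIcc a b))
  have hpow : IntervalIntegrable (fun t : ℝ => K * t ^ (e - 2)) volume a b :=
    (intervalIntegral.intervalIntegrable_rpow (Or.inr h₀)).const_mul K
  have hpoint (t : ℝ) (ht : t ∈ Set.Ioc a b) :
      ‖Chebyshev.theta t / t ^ 2 - t⁻¹‖ ≤ K * t ^ (e - 2) := by
    have ht₀ : 0 < t := ha.trans ht.1
    have heq : Chebyshev.theta t / t ^ 2 - t⁻¹ = (Chebyshev.theta t - t) / t ^ 2 := by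
      field_simp
    rw [heq, norm_div, Real.norm_eq_abs, Real.norm_of_nonneg (by positivity), Real.rpow_sub ht₀,
      Real.rpow_two, ← mul_div_assoc]
    gcongr
    exact hθ t ht₀
  have hnorm := intervalIntegral.norm_integral_le_of_norm_le hab (.of_forall hpoint) hpow
  rw [intervalIntegral.integral_sub (intervalIntegrable_theta_div_sq ha hab) hinv,
    integral_inv h₀, intervalIntegral.integral_const_mul,
    integral_rpow (Or.inr ⟨by linarith, h₀⟩), Real.norm_eq_abs] at hnorm
  refine hnorm.trans ?_
  have hexp : e - 2 + 1 = -(1 - e) := by ring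
  rw [hexp, div_neg, ← neg_div, neg_sub, mul_div_assoc', div_mul_eq_mul_div, neg_sub]
  gcongr
  exact sub_le_self _ (Real.rpow_nonneg (ha.le.trans hab) _)

lemma abs_theta_div_sub_one_le (he : e ≤ 1)
    (hθ : ∀ x : ℝ, 0 < x → |Chebyshev.theta x - x| ≤ K * x ^ e) (ha : 0 < a) (hab : a ≤ b) :
    |Chebyshev.theta b / b - 1| ≤ K * a ^ (e - 1) := by
  have hK : 1 ≤ K := one_le_of_abs_theta_sub_le hθ
  have hb : 0 < b := ha.trans_le hab
  calc |Chebyshev.theta b / b - 1| = |Chebyshev.theta b - b| / b := by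
        rw [← abs_of_pos hb, ← abs_div, abs_of_pos hb, sub_div, div_self hb.ne']
    _ ≤ K * b ^ e / b := by gcongr; exact hθ b hb
    _ = K * b ^ (e - 1) := by rw [Real.rpow_sub_one hb.ne', mul_div_assoc]
    _ ≤ K * a ^ (e - 1) := by
        gcongr ?_ * ?_
        exact Real.rpow_le_rpow_of_nonpos ha hab (by linarith)

theorem abs_sum_primesIoc_log_div_sub_log_le (he : e < 1)
    (hθ : ∀ x : ℝ, 0 < x → |Chebyshev.theta x - x| ≤ K * x ^ e) (ha : 0 < a) (hab : a ≤ b) :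
    |∑ p ∈ primesIoc a b, Real.log p / p - Real.log (b / a)|
      ≤ (2 + 1 / (1 - e)) * K * a ^ (e - 1) := by
  have hupper := abs_le.1 (abs_theta_div_sub_one_le he.le hθ ha hab)
  have hlower := abs_le.1 (abs_theta_div_sub_one_le he.le hθ ha le_rfl)
  have hint := abs_le.1 (abs_integral_theta_div_sq_sub_log_le he hθ ha hab)
  have hsplit : (2 + 1 / (1 - e)) * K * a ^ (e - 1)
      = K * a ^ (e - 1) + K * a ^ (e - 1) + K / (1 - e) * a ^ (e - 1) := by ring
  rw [sum_primesIoc_log_div_eq ha hab, hsplit, abs_le]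
  constructor <;> linarith

end Mertens

section LogWeightedPairs

variable {r σ x y e K : ℝ}

/-- The prime-pair count `NALGV` with each pair `(p, q)` weighted by `log p * log q`, which makes it
accessible to the prime number theorem for the Chebyshev function `θ`. -/
noncomputable def logWeightedNALGV (r σ x : ℝ) : ℝ :=
  ∑ p ∈ primesIoc (r ^ (σ - 1) * √x) (r ^ σ * √x),
    Real.log p * ∑ q ∈ primesIoc (x / (r * p)) (x / p), Real.log q

/-- Up to a constant, the error of `logWeightedNALGV r σ x` relative to `x` when
`θ(t) = t + O(t ^ e)`: since `p > r ^ (σ - 1) * √x` and `x / p ≥ r ^ (-σ) * √x`, the powers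
`(r ^ (σ - 1) * √x) ^ (e - 1)` and `(r ^ (-σ) * √x) ^ (e - 1)` bound the relative errors of the
sums over `p` and over `q`. -/
noncomputable def pairError (e r σ x : ℝ) : ℝ :=
  (1 - 1 / r) * (r ^ (σ - 1) * √x) ^ (e - 1)
    + (r ^ (-σ) * √x) ^ (e - 1) * (Real.log r + (r ^ (σ - 1) * √x) ^ (e - 1))

lemma NALGV_eq_sum_card (hr : 0 < r) (hx : 0 < x) :
    NALGV r σ x = ∑ p ∈ primesIoc (r ^ (σ - 1) * √x) (r ^ σ * √x),
      (primesIoc (x / (r * p)) (x / p)).card := by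
  rw [← Finset.card_sigma, ← Finset.card_map (Equiv.sigmaEquivProd ℕ ℕ).toEmbedding, NALGV]
  refine Nat.subtype_card _ ?_
  rintro ⟨p, q⟩
  simp only [Finset.mem_map_equiv, Equiv.sigmaEquivProd_symm_apply, Finset.mem_sigma]
  rw [mem_primesIoc (by positivity) (by positivity), mem_primesIoc (by positivity) (by positivity)]
  tauto

lemma abs_sum_primesIoc_log_sub_mul_le (he : 0 ≤ e)
    (hθ : ∀ x : ℝ, 0 < x → |Chebyshev.theta x - x| ≤ K * x ^ e) (hr : 1 ≤ r) (hy : 0 < y) :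
    |∑ q ∈ primesIoc (y / r) y, Real.log q - (1 - 1 / r) * y| ≤ 2 * K * y ^ e := by
  have hK : 1 ≤ K := one_le_of_abs_theta_sub_le hθ
  have hyr : y / r ≤ y := div_le_self hy.le hr
  have hsplit : Chebyshev.theta y - Chebyshev.theta (y / r) - (1 - 1 / r) * y
      = (Chebyshev.theta y - y) - (Chebyshev.theta (y / r) - y / r) := by ring
  calc |∑ q ∈ primesIoc (y / r) y, Real.log q - (1 - 1 / r) * y|
      ≤ |Chebyshev.theta y - y| + |Chebyshev.theta (y / r) - y / r| := by
        rw [sum_primesIoc_log hyr, hsplit]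
        exact abs_sub _ _
    _ ≤ K * y ^ e + K * (y / r) ^ e := add_le_add (hθ y hy) (hθ _ (by positivity))
    _ ≤ K * y ^ e + K * y ^ e := by gcongr
    _ = 2 * K * y ^ e := by ring

lemma rpow_le_mul_rpow_sub_one {z : ℝ} (he : e ≤ 1) (hz : 0 < z) (hzy : z ≤ y) :
    y ^ e ≤ y * z ^ (e - 1) := by
  have hy : 0 < y := hz.trans_le hzy
  calc y ^ e = y * y ^ (e - 1) := by rw [Real.rpow_sub_one hy.ne', mul_div_cancel₀ _ hy.ne']
    _ ≤ y * z ^ (e - 1) := by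
        gcongr ?_ * ?_
        exact Real.rpow_le_rpow_of_nonpos hz hzy (by linarith)

lemma div_rpow_mul_sqrt (hr : 0 < r) : x / (r ^ σ * √x) = r ^ (-σ) * √x := by
  rw [Real.rpow_neg hr.le, mul_comm, ← div_div, Real.div_sqrt, div_eq_inv_mul]

lemma abs_logWeightedNALGV_sub_mul_sum_le (he₀ : 0 ≤ e) (he₁ : e ≤ 1)
    (hθ : ∀ x : ℝ, 0 < x → |Chebyshev.theta x - x| ≤ K * x ^ e) (hr : 1 < r) (hx : 0 < x) :
    |logWeightedNALGV r σ x - x * (1 - 1 / r) *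
        ∑ p ∈ primesIoc (r ^ (σ - 1) * √x) (r ^ σ * √x), Real.log p / p|
      ≤ 2 * K * x * (r ^ (-σ) * √x) ^ (e - 1) *
        ∑ p ∈ primesIoc (r ^ (σ - 1) * √x) (r ^ σ * √x), Real.log p / p := by
  have hK : 1 ≤ K := one_le_of_abs_theta_sub_le hθ
  have hr₀ : 0 < r := one_pos.trans hr
  rw [logWeightedNALGV, Finset.mul_sum, Finset.mul_sum, ← Finset.sum_sub_distrib]
  refine (Finset.abs_sum_le_sum_abs _ _).trans (Finset.sum_le_sum fun p hp => ?_)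
  rw [mem_primesIoc (by positivity) (by positivity)] at hp
  have hp₀ : (0 : ℝ) < p := mod_cast hp.2.2.pos
  have hlog : 0 ≤ Real.log p := Real.log_natCast_nonneg p
  have hcofactor : r ^ (-σ) * √x ≤ x / p := by
    rw [← div_rpow_mul_sqrt hr₀]
    gcongr
    exact hp.2.1
  have hfactor : Real.log p * ∑ q ∈ primesIoc (x / (r * p)) (x / p), Real.log q
      - x * (1 - 1 / r) * (Real.log p / p)
      = Real.log p * (∑ q ∈ primesIoc (x / p / r) (x / p), Real.log q - (1 - 1 / r) * (x / p)) := by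
    rw [div_div x, mul_comm r]
    ring
  rw [hfactor, abs_mul, abs_of_nonneg hlog]
  calc Real.log p * |∑ q ∈ primesIoc (x / p / r) (x / p), Real.log q - (1 - 1 / r) * (x / p)|
      ≤ Real.log p * (2 * K * (x / p) ^ e) := by
        gcongr
        exact abs_sum_primesIoc_log_sub_mul_le he₀ hθ hr.le (by positivity)
    _ ≤ Real.log p * (2 * K * (x / p * (r ^ (-σ) * √x) ^ (e - 1))) := by
        gcongr
        exact rpow_le_mul_rpow_sub_one he₁ (by positivity) hcofactor
    _ = 2 * K * x * (r ^ (-σ) * √x) ^ (e - 1) * (Real.log p / p) := by ring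

lemma one_sub_one_div_pos (hr : 1 < r) : 0 < 1 - 1 / r :=
  sub_pos.2 ((div_lt_one (one_pos.trans hr)).2 hr)

theorem abs_logWeightedNALGV_sub_le (he₀ : 0 ≤ e) (he₁ : e < 1)
    (hθ : ∀ x : ℝ, 0 < x → |Chebyshev.theta x - x| ≤ K * x ^ e) (hr : 1 < r) (hx : 0 < x) :
    |logWeightedNALGV r σ x - x * (1 - 1 / r) * Real.log r|
      ≤ x * (2 * (2 + 1 / (1 - e)) * K ^ 2 * pairError e r σ x) := by
  have hK : 1 ≤ K := one_le_of_abs_theta_sub_le hθ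
  have hr₀ : 0 < r := one_pos.trans hr
  have hlog : 0 < Real.log r := Real.log_pos hr
  have hxc : 0 < x * (1 - 1 / r) := mul_pos hx (one_sub_one_div_pos hr)
  have hratio : r ^ σ * √x / (r ^ (σ - 1) * √x) = r := by
    rw [Real.rpow_sub_one hr₀.ne']
    field_simp
  have hmertens := abs_sum_primesIoc_log_div_sub_log_le (b := r ^ σ * √x) he₁ hθ
    (show 0 < r ^ (σ - 1) * √x by positivity) (by gcongr; exacts [hr.le, by linarith])
  rw [hratio] at hmertens
  rw [pairError]
  have hpairs := abs_logWeightedNALGV_sub_mul_sum_le (σ := σ) he₀ he₁.le hθ hr hx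
  set M := ∑ p ∈ primesIoc (r ^ (σ - 1) * √x) (r ^ σ * √x), Real.log p / p
  set α := (r ^ (σ - 1) * √x) ^ (e - 1)
  set γ := (r ^ (-σ) * √x) ^ (e - 1)
  set C := 2 + 1 / (1 - e)
  have hC : 2 ≤ C := le_add_of_nonneg_right (one_div_nonneg.2 (sub_nonneg.2 he₁.le))
  have hCK : 1 ≤ C * K := by nlinarith
  have hM : M ≤ C * K * (Real.log r + α) := by
    have := (abs_le.1 hmertens).2
    nlinarith
  calc |logWeightedNALGV r σ x - x * (1 - 1 / r) * Real.log r|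
      ≤ |logWeightedNALGV r σ x - x * (1 - 1 / r) * M|
        + |x * (1 - 1 / r) * M - x * (1 - 1 / r) * Real.log r| := abs_sub_le _ _ _
    _ ≤ 2 * K * x * γ * M + x * (1 - 1 / r) * (C * K * α) := by
        rw [← mul_sub, abs_mul, abs_of_pos hxc]
        gcongr
    _ ≤ 2 * K * x * γ * (C * K * (Real.log r + α)) + x * (1 - 1 / r) * (C * K * α * (2 * K)) := by
        gcongr ?_ * ?_ + ?_ * ?_
        exact le_mul_of_one_le_right (by positivity) (by linarith)
    _ = x * (2 * C * K ^ 2 * ((1 - 1 / r) * α + γ * (Real.log r + α))) := by ring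

end LogWeightedPairs

section ErrorTerm

variable {r σ x e K c v l α γ : ℝ}

lemma one_sub_one_div_le_log (hr : 0 < r) : 1 - 1 / r ≤ Real.log r := by
  simpa only [one_div] using Real.one_sub_inv_le_log_of_pos hr

lemma log_le_mul_one_sub_one_div (hr : 0 < r) : Real.log r ≤ r * (1 - 1 / r) := by
  rw [mul_sub, mul_one, mul_one_div_cancel hr.ne']
  exact Real.log_le_sub_one_of_pos hr

lemma eventually_const_mul_log_le_rpow {s : ℝ} (hs : 0 < s) (hK : 0 < K) :
    ∀ᶠ x : ℝ in atTop, K * Real.log x ≤ x ^ s := by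
  filter_upwards [(isLittleO_log_rpow_atTop hs).bound (inv_pos.2 hK), eventually_ge_atTop 0]
    with x hx hx₀
  rw [Real.norm_of_nonneg (Real.rpow_nonneg hx₀ s), inv_mul_eq_div, le_div_iff₀' hK] at hx
  exact (mul_le_mul_of_nonneg_left (Real.le_norm_self _) hK.le).trans hx

lemma mul_add_mul_le_div_or_le {ε τ : ℝ} (hK : 0 ≤ K) (hl : 0 < l) (hv : 0 < v) (hcv : c ≤ v)
    (hvc : v ≤ 2 * c) (hα₀ : 0 ≤ α) (hα : α ≤ 2 * ε) (hγ : γ ≤ 2 * ε) (hετ : ε ≤ τ)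
    (hKl : 16 * K * l * ε ≤ τ ^ 2) :
    K * (c * α + γ * (v + α)) ≤ c * v * v / l ∨ K * (c * α + γ * (v + α)) ≤ 8 * K * (ε * τ) := by
  have hε : 0 ≤ ε := by linarith
  have herror : K * (c * α + γ * (v + α)) ≤ K * (4 * ε * (v + ε)) :=
    calc K * (c * α + γ * (v + α)) ≤ K * (v * (2 * ε) + 2 * ε * (v + 2 * ε)) := by gcongr
      _ = K * (4 * ε * (v + ε)) := by ring
  rcases le_or_gt v τ with hvτ | hτv
  · right
    calc K * (c * α + γ * (v + α)) ≤ K * (4 * ε * (τ + τ)) := herror.trans (by gcongr)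
      _ = 8 * K * (ε * τ) := by ring
  · left
    rw [le_div_iff₀ hl]
    calc K * (c * α + γ * (v + α)) * l ≤ K * (4 * ε * (v + v)) * l := by
          gcongr ?_ * l
          exact herror.trans (by gcongr; linarith)
      _ = v / 2 * (16 * K * l * ε) := by ring
      _ ≤ v / 2 * v ^ 2 := by
          gcongr
          exact hKl.trans (by gcongr; linarith)
      _ ≤ c * v ^ 2 := by gcongr; linarith
      _ = c * v * v := by ring

lemma mul_add_mul_le_div {q : ℝ} (hK : 0 ≤ K) (hl₀ : 0 < l) (hl : 64 * K ≤ l) (hq : 0 ≤ q)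
    (hKl : 16 * K * l * q ≤ 1) (hc : 1 / 2 ≤ c) (hv : 1 / 2 ≤ v) (hα₀ : 0 ≤ α) (hα₁ : α ≤ 1)
    (hα : v ≤ l / 4 → α ≤ q) (hγ : γ ≤ q) :
    K * (c * α + γ * (v + α)) ≤ c * v * v / l := by
  have herror : K * (c * α + γ * (v + α)) ≤ c * (K * (α + 6 * q * v)) :=
    calc K * (c * α + γ * (v + α)) ≤ K * (c * α + 2 * c * (q * (v + 2 * v))) := by
          gcongr K * (c * α + ?_)
          calc γ * (v + α) ≤ q * (v + 2 * v) := by gcongr; linarith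
            _ ≤ 2 * c * (q * (v + 2 * v)) :=
                le_mul_of_one_le_left (by positivity) (by linarith)
      _ = c * (K * (α + 6 * q * v)) := by ring
  have hbracket : K * (α + 6 * q * v) * l ≤ v * v := by
    rcases le_or_gt v (l / 4) with hvl | hlv
    · calc K * (α + 6 * q * v) * l ≤ K * (2 * v * q + 6 * q * v) * l := by
            gcongr
            exact (hα hvl).trans (le_mul_of_one_le_left hq (by linarith))
        _ = v / 2 * (16 * K * l * q) := by ring
        _ ≤ v / 2 * 1 := by gcongr
        _ ≤ v * v := by nlinarith
    · calc K * (α + 6 * q * v) * l ≤ K * (1 + 6 * q * v) * l := by gcongr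
        _ = 64 * K * l / 64 + 6 / 16 * v * (16 * K * l * q) := by ring
        _ ≤ l * l / 64 + 6 / 16 * v * 1 := by gcongr
        _ ≤ v * v := by nlinarith
  rw [le_div_iff₀ hl₀]
  calc K * (c * α + γ * (v + α)) * l ≤ c * (K * (α + 6 * q * v)) * l := by gcongr
    _ = c * (K * (α + 6 * q * v) * l) := by ring
    _ ≤ c * (v * v) := by gcongr
    _ = c * v * v := by ring

section PowerBounds

variable {t : ℝ}

lemma rpow_mul_sqrt_rpow (hr : 0 < r) (hx : 0 ≤ x) :
    (r ^ t * √x) ^ (e - 1) = r ^ (-t * (1 - e)) * x ^ (-((1 - e) / 2)) := by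
  rw [Real.mul_rpow (by positivity) (by positivity), ← Real.rpow_mul hr.le, Real.sqrt_eq_rpow,
    ← Real.rpow_mul hx]
  congr 2 <;> ring

lemma rpow_mul_sqrt_rpow_le_two_mul (hr : 1 ≤ r) (hr₂ : r ≤ 2) (hx : 0 ≤ x) (he₀ : 0 ≤ e)
    (he₁ : e ≤ 1) (ht : -t ≤ 1) : (r ^ t * √x) ^ (e - 1) ≤ 2 * x ^ (-((1 - e) / 2)) := by
  rw [rpow_mul_sqrt_rpow (one_pos.trans_le hr) hx]
  gcongr
  calc r ^ (-t * (1 - e)) ≤ r ^ (1 : ℝ) := Real.rpow_le_rpow_of_exponent_le hr (by nlinarith)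
    _ ≤ 2 := by rwa [Real.rpow_one]

lemma rpow_mul_sqrt_rpow_le {k : ℝ} (hr : 0 < r) (hx : 0 < x) (he : e ≤ 1)
    (ht : -t * Real.log r ≤ k * Real.log x) :
    (r ^ t * √x) ^ (e - 1) ≤ x ^ (-((1 / 2 - k) * (1 - e))) := by
  have hrx : r ^ (-t) ≤ x ^ k := by
    rwa [← Real.log_le_log_iff (by positivity) (by positivity), Real.log_rpow hr, Real.log_rpow hx]
  calc (r ^ t * √x) ^ (e - 1) = (r ^ (-t)) ^ (1 - e) * x ^ (-((1 - e) / 2)) := by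
        rw [rpow_mul_sqrt_rpow hr hx.le, Real.rpow_mul hr.le]
    _ ≤ (x ^ k) ^ (1 - e) * x ^ (-((1 - e) / 2)) := by
        gcongr
    _ = x ^ (-((1 / 2 - k) * (1 - e))) := by
        rw [← Real.rpow_mul hx.le, ← Real.rpow_add hx]
        congr 1
        ring

end PowerBounds

lemma mul_pairError_le_or_le_of_le_two (hK : 0 ≤ K) (he₀ : 0 ≤ e) (he₁ : e ≤ 3 / 4)
    (hσ : σ ∈ Set.Icc 0 1) (hr : 1 < r) (hr₂ : r ≤ 2) (hx : 1 < x)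
    (hKx : 16 * K * Real.log x ≤ x ^ (1 - 3 / 2 * e)) :
    K * pairError e r σ x ≤ (1 - 1 / r) * Real.log r * Real.log r / Real.log x ∨
    K * pairError e r σ x ≤ 8 * K * x ^ (-(1 / 4) : ℝ) := by
  have hx₀ : 0 < x := one_pos.trans hx
  have hr₀ : 0 < r := one_pos.trans hr
  have hproduct : x ^ (-((1 - e) / 2)) * x ^ ((1 - e) / 2 - 1 / 4) = x ^ (-(1 / 4) : ℝ) := by
    rw [← Real.rpow_add hx₀]
    congr 1
    ring
  rw [pairError, ← hproduct]
  refine mul_add_mul_le_div_or_le hK (Real.log_pos hx) (Real.log_pos hr)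
    (one_sub_one_div_le_log hr₀) ?_ (by positivity)
    (rpow_mul_sqrt_rpow_le_two_mul hr.le hr₂ hx₀.le he₀ (by linarith)
      (by linarith [hσ.1]))
    (rpow_mul_sqrt_rpow_le_two_mul hr.le hr₂ hx₀.le he₀ (by linarith)
      (by linarith [hσ.2]))
    (Real.rpow_le_rpow_of_exponent_le hx.le (by linarith)) ?_
  · refine (log_le_mul_one_sub_one_div hr₀).trans ?_
    gcongr
    exact (one_sub_one_div_pos hr).le
  · calc 16 * K * Real.log x * x ^ (-((1 - e) / 2))
        ≤ x ^ (1 - 3 / 2 * e) * x ^ (-((1 - e) / 2)) := by gcongr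
      _ = (x ^ ((1 - e) / 2 - 1 / 4)) ^ 2 := by
          rw [← Real.rpow_add hx₀, ← Real.rpow_mul_natCast hx₀.le]
          congr 1
          push_cast
          ring

lemma mul_pairError_le_of_two_lt (hK : 0 ≤ K) (he : e ≤ 1) (hσ : σ ∈ Set.Icc 0 1) (hr : 2 < r)
    (hx : 0 < x) (hl : 2 * (1 + σ) * Real.log r < Real.log x) (hlog : 64 * K ≤ Real.log x)
    (hKx : 16 * K * Real.log x ≤ x ^ ((1 - e) / 4)) :
    K * pairError e r σ x ≤ (1 - 1 / r) * Real.log r * Real.log r / Real.log x := by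
  obtain ⟨hσ₀, hσ₁⟩ := hσ
  have hr₀ : 0 < r := two_pos.trans hr
  have hv : 1 / 2 ≤ Real.log r := by
    linarith [Real.log_two_gt_d9, Real.log_lt_log two_pos hr]
  have hl₀ : 0 < Real.log x := lt_trans (by positivity) hl
  have hquarter {t : ℝ} (ht : -t * Real.log r ≤ 1 / 4 * Real.log x) :
      (r ^ t * √x) ^ (e - 1) ≤ x ^ (-((1 - e) / 4)) :=
    (rpow_mul_sqrt_rpow_le hr₀ hx he ht).trans_eq (by congr 1; ring)
  have hc : 1 / 2 ≤ 1 - 1 / r := by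
    linarith [one_div_le_one_div_of_le two_pos hr.le]
  rw [pairError]
  refine mul_add_mul_le_div hK hl₀ hlog (by positivity) ?_ hc hv (by positivity) ?_
    (fun h => hquarter (by nlinarith)) (hquarter (by nlinarith))
  · calc 16 * K * Real.log x * x ^ (-((1 - e) / 4))
        ≤ x ^ ((1 - e) / 4) * x ^ (-((1 - e) / 4)) := by gcongr
      _ = 1 := by rw [← Real.rpow_add hx, add_neg_cancel, Real.rpow_zero]
  · refine (rpow_mul_sqrt_rpow_le (k := 1 / 2) hr₀ hx he (by nlinarith)).trans_eq ?_
    rw [sub_self, zero_mul, neg_zero, Real.rpow_zero]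

theorem abs_logWeightedNALGV_sub_le_or (hK : 0 ≤ K) (he₀ : 0 ≤ e) (he₁ : e ≤ 3 / 4)
    (hσ : σ ∈ Set.Icc 0 1) (hr : 1 < r) (hx : 1 < x)
    (hl : 2 * (1 + σ) * Real.log r < Real.log x) (hlog : 64 * K ≤ Real.log x)
    (hKx : 16 * K * Real.log x ≤ x ^ (1 - 3 / 2 * e))
    (hKx' : 16 * K * Real.log x ≤ x ^ ((1 - e) / 4))
    (hT : |logWeightedNALGV r σ x - x * (1 - 1 / r) * Real.log r|
      ≤ x * (K * pairError e r σ x)) :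
    |logWeightedNALGV r σ x - x * (1 - 1 / r) * Real.log r|
      ≤ x * (1 - 1 / r) * Real.log r * Real.log r / Real.log x ∨
    r ≤ 2 ∧ |logWeightedNALGV r σ x - x * (1 - 1 / r) * Real.log r|
      ≤ 8 * K * x ^ ((3 : ℝ) / 4) := by
  have hx₀ : 0 < x := one_pos.trans hx
  have hrelative : x * ((1 - 1 / r) * Real.log r * Real.log r / Real.log x)
      = x * (1 - 1 / r) * Real.log r * Real.log r / Real.log x := by ring
  have hpower : x * (8 * K * x ^ (-(1 / 4) : ℝ)) = 8 * K * x ^ ((3 : ℝ) / 4) := by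
    rw [mul_left_comm, ← Real.rpow_one_add' hx₀.le (by norm_num)]
    norm_num
  rw [← hrelative, ← hpower]
  rcases le_or_gt r 2 with hr₂ | hr₂
  · exact (mul_pairError_le_or_le_of_le_two hK he₀ he₁ hσ hr hr₂ hx hKx).imp
      (fun h => hT.trans (by gcongr)) (fun h => ⟨hr₂, hT.trans (by gcongr)⟩)
  · have h := mul_pairError_le_of_two_lt hK (by linarith) hσ hr₂ hx₀ hl hlog hKx'
    exact .inl (hT.trans (by gcongr))

end ErrorTerm

section CountFromWeights

variable {r σ x : ℝ}

lemma mul_le_sq_div_four {a b l : ℝ} (ha : 0 ≤ a) (hb : 0 ≤ b) (hab : a + b ≤ l) :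
    a * b ≤ l ^ 2 / 4 := by
  nlinarith [sq_nonneg (a - b)]

lemma half_mul_half_sub_le_mul {a b l v : ℝ} (hσ : 0 ≤ σ) (hv : 0 ≤ v)
    (hl : 2 * (1 + σ) * v ≤ l) (hab : l - v ≤ a + b) (hal : l / 2 - (1 - σ) * v ≤ a)
    (hau : a ≤ l / 2 + σ * v) : l / 2 * (l / 2 - (1 + σ) * v) ≤ a * b := by
  have hσv : 0 ≤ σ * v := mul_nonneg hσ hv
  have hdeviation : (a - l / 2) * (a - l / 2 + v) ≤ σ * v * (l / 2) :=
    mul_le_mul (by linarith) (by linarith) (by linarith) hσv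
  calc l / 2 * (l / 2 - (1 + σ) * v) = l / 2 * (l / 2 - v) - σ * v * (l / 2) := by ring
    _ ≤ l / 2 * (l / 2 - v) - (a - l / 2) * (a - l / 2 + v) := by gcongr
    _ = a * (l - v - a) := by ring
    _ ≤ a * b := mul_le_mul_of_nonneg_left (by linarith) (by linarith)

lemma log_mul_log_bounds {p q : ℝ} (hσ : 0 ≤ σ) (hr : 1 < r) (hx : 0 < x)
    (hl : 2 * (1 + σ) * Real.log r < Real.log x) (hp : 1 ≤ p) (hq : 1 ≤ q)
    (hpl : r ^ (σ - 1) * √x < p) (hpu : p ≤ r ^ σ * √x)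
    (hql : x / (r * p) < q) (hqu : q ≤ x / p) :
    Real.log x / 2 * (Real.log x / 2 - (1 + σ) * Real.log r) ≤ Real.log p * Real.log q ∧
      Real.log p * Real.log q ≤ Real.log x ^ 2 / 4 := by
  have hr₀ : 0 < r := one_pos.trans hr
  have hp₀ : 0 < p := one_pos.trans_le hp
  have hv : 0 < Real.log r := Real.log_pos hr
  have hlogpl := Real.log_le_log (by positivity) hpl.le
  have hlogpu := Real.log_le_log hp₀ hpu
  have hlogql := Real.log_le_log (by positivity) hql.le
  have hlogqu := Real.log_le_log (by positivity) hqu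
  rw [Real.log_mul (by positivity) (by positivity), Real.log_rpow hr₀, Real.log_sqrt hx.le]
    at hlogpl hlogpu
  rw [Real.log_div hx.ne' (by positivity), Real.log_mul hr₀.ne' hp₀.ne'] at hlogql
  rw [Real.log_div hx.ne' hp₀.ne'] at hlogqu
  exact ⟨half_mul_half_sub_le_mul hσ hv.le hl.le (by linarith) (by linarith) (by linarith),
    mul_le_sq_div_four (Real.log_nonneg hp) (Real.log_nonneg hq) (by linarith)⟩

theorem logWeightedNALGV_bounds (hσ : 0 ≤ σ) (hr : 1 < r) (hx : 0 < x)
    (hl : 2 * (1 + σ) * Real.log r < Real.log x) :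
    NALGV r σ x * (Real.log x / 2 * (Real.log x / 2 - (1 + σ) * Real.log r))
        ≤ logWeightedNALGV r σ x ∧
      logWeightedNALGV r σ x ≤ NALGV r σ x * (Real.log x ^ 2 / 4) := by
  have hr₀ : 0 < r := one_pos.trans hr
  have hpair : ∀ p ∈ primesIoc (r ^ (σ - 1) * √x) (r ^ σ * √x),
      ∀ q ∈ primesIoc (x / (r * p)) (x / p),
        Real.log x / 2 * (Real.log x / 2 - (1 + σ) * Real.log r) ≤ Real.log p * Real.log q ∧
          Real.log p * Real.log q ≤ Real.log x ^ 2 / 4 := by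
    intro p hp q hq
    rw [mem_primesIoc (by positivity) (by positivity)] at hp hq
    exact log_mul_log_bounds hσ hr hx hl (mod_cast hp.2.2.one_le) (mod_cast hq.2.2.one_le)
      hp.1 hp.2.1 hq.1 hq.2.1
  rw [NALGV_eq_sum_card hr₀ hx, logWeightedNALGV, Nat.cast_sum, Finset.sum_mul, Finset.sum_mul]
  constructor <;> refine Finset.sum_le_sum fun p hp => ?_ <;> rw [Finset.mul_sum, ← nsmul_eq_mul]
  · exact Finset.card_nsmul_le_sum _ _ _ fun q hq => (hpair p hp q hq).1
  · exact Finset.sum_le_card_nsmul _ _ _ fun q hq => (hpair p hp q hq).2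

lemma NALGV_le_sq (hr : 0 < r) (hx : 0 < x) (hrx : r ^ σ * √x ≤ x) :
    (NALGV r σ x : ℝ) ≤ x ^ 2 := by
  have hinner : ∀ p ∈ primesIoc (r ^ (σ - 1) * √x) (r ^ σ * √x),
      ((primesIoc (x / (r * p)) (x / p)).card : ℝ) ≤ x := by
    intro p hp
    rw [mem_primesIoc (by positivity) (by positivity)] at hp
    exact (card_primesIoc_le (by positivity)).trans
      (div_le_self hx.le (mod_cast hp.2.2.one_le))
  calc (NALGV r σ x : ℝ)
      = ∑ p ∈ primesIoc (r ^ (σ - 1) * √x) (r ^ σ * √x),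
          ((primesIoc (x / (r * p)) (x / p)).card : ℝ) := by
        rw [NALGV_eq_sum_card hr hx, Nat.cast_sum]
    _ ≤ (primesIoc (r ^ (σ - 1) * √x) (r ^ σ * √x)).card * x := by
        rw [← nsmul_eq_mul]
        exact Finset.sum_le_card_nsmul _ _ _ hinner
    _ ≤ x * x := by
        gcongr
        exact (card_primesIoc_le (by positivity)).trans hrx
    _ = x ^ 2 := (sq x).symm

end CountFromWeights

section Coefficient

variable {N T X E l v s σ B : ℝ}

lemma four_mul_div_sq_sub_le (hX : 0 ≤ X) (hl : 2 ≤ l) (hv : 0 ≤ v) (hvl : 2 * v ≤ l)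
    (hs : 1 / 2 ≤ s) (hN : T ≤ N * (l ^ 2 / 4)) (hE : 0 ≤ E)
    (hT : |T - X| ≤ X * v / l ∨ |T - X| ≤ E) :
    4 * X / (l + 2 * s * v) ^ 2 - E ≤ N := by
  have hTN : 4 * T / l ^ 2 ≤ N := by
    rw [div_le_iff₀ (by positivity)]
    linarith
  have hs' : 4 * X / (l + 2 * s * v) ^ 2 ≤ 4 * X / (l + v) ^ 2 := by
    gcongr
    nlinarith
  rcases hT with hT | hT <;> have hXT := (abs_le.1 hT).1
  · suffices h : 4 * X / (l + v) ^ 2 ≤ 4 * T / l ^ 2 by linarith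
    calc 4 * X / (l + v) ^ 2 ≤ 4 * (X * (1 - v / l)) / l ^ 2 := by
          have hcubic : 0 ≤ X * v * (l ^ 2 - l * v - v ^ 2) / l := by
            have : 0 ≤ l ^ 2 - l * v - v ^ 2 := by nlinarith
            positivity
          have hexpand : 4 * (X * (1 - v / l)) * (l + v) ^ 2
              = 4 * X * l ^ 2 + 4 * (X * v * (l ^ 2 - l * v - v ^ 2) / l) := by
            field_simp
            ring
          rw [div_le_div_iff₀ (by positivity) (by positivity), hexpand]
          linarith
      _ ≤ 4 * T / l ^ 2 := by
          gcongr
          rw [mul_sub, mul_one, mul_div_assoc']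
          linarith
  · calc 4 * X / (l + 2 * s * v) ^ 2 - E ≤ 4 * X / l ^ 2 - 4 * E / l ^ 2 := by
          have hE' : 4 * E / l ^ 2 ≤ E := by
            rw [div_le_iff₀ (by positivity)]
            nlinarith [mul_nonneg hE (show 0 ≤ l ^ 2 - 4 by nlinarith)]
          have hv' : 4 * X / (l + v) ^ 2 ≤ 4 * X / l ^ 2 := by
            gcongr
            linarith
          linarith
      _ = 4 * (X - E) / l ^ 2 := by ring
      _ ≤ 4 * T / l ^ 2 := by gcongr; linarith
      _ ≤ N := hTN

lemma le_div_sq_add (hX : 0 ≤ X) (hl : 2 ≤ l) (hB : 0 < B) (hv : 0 ≤ v) (hBl : B ≤ l / 2 - v)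
    (hN : N * (l / 2 * B) ≤ T) (hE : 0 ≤ E)
    (hT : |T - X| ≤ X * v / l ∨ 1 ≤ B ∧ |T - X| ≤ E) :
    N ≤ X / B ^ 2 + E := by
  have hNT : N ≤ T / (l / 2 * B) := by rwa [le_div_iff₀ (by positivity)]
  rcases hT with hT | ⟨hB₁, hT⟩ <;> have hTX := (abs_le.1 hT).2
  · suffices h : T / (l / 2 * B) ≤ X / B ^ 2 by linarith
    have hratio : (1 + v / l) * B ≤ l / 2 :=
      calc (1 + v / l) * B ≤ (1 + v / l) * (l / 2 - v) := by gcongr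
        _ = l / 2 - v / 2 - v ^ 2 / l := by field_simp; ring
        _ ≤ l / 2 := by
            have : 0 ≤ v ^ 2 / l := by positivity
            linarith
    rw [div_le_div_iff₀ (by positivity) (by positivity)]
    calc T * B ^ 2 ≤ X * (1 + v / l) * B ^ 2 := by
          gcongr
          rw [mul_add, mul_one, mul_div_assoc']
          linarith
      _ = X * B * ((1 + v / l) * B) := by ring
      _ ≤ X * B * (l / 2) := by gcongr
      _ = X * (l / 2 * B) := by ring
  · calc N ≤ T / (l / 2 * B) := hNT
      _ ≤ (X + E) / (l / 2 * B) := by gcongr; linarith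
      _ = X / (l / 2 * B) + E / (l / 2 * B) := add_div _ _ _
      _ ≤ X / B ^ 2 + E := by
          rw [sq]
          gcongr
          · linarith
          · exact div_le_self hE (by nlinarith)

lemma exists_mem_Icc_abs_sub_mul_le {L U M : ℝ} (hM : 0 < M) (hLU : L ≤ U) (hE : 0 ≤ E)
    (hL : L * M - E ≤ N) (hU : N ≤ U * M + E) : ∃ a ∈ Set.Icc L U, |N - a * M| ≤ E := by
  rcases le_or_gt (N / M) L with hNL | hLN
  · refine ⟨L, ⟨le_rfl, hLU⟩, ?_⟩
    rw [div_le_iff₀ hM] at hNL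
    rw [abs_le]
    constructor <;> linarith
  rcases le_or_gt (N / M) U with hNU | hUN
  · refine ⟨N / M, ⟨hLN.le, hNU⟩, ?_⟩
    rwa [div_mul_cancel₀ _ hM.ne', sub_self, abs_zero]
  · refine ⟨U, ⟨hLU, le_rfl⟩, ?_⟩
    rw [lt_div_iff₀ hM] at hUN
    rw [abs_le]
    constructor <;> linarith

lemma exists_coefficient (hX : 0 < X) (hv : 0 < v) (hσ : 0 ≤ σ) (hs : 0 ≤ s)
    (hl : 2 * (1 + σ) * v < l) (hE : 0 ≤ E) (hlower : 4 * X / (l + 2 * s * v) ^ 2 - E ≤ N)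
    (hupper : N ≤ X / (l / 2 - (1 + σ) * v) ^ 2 + E) :
    ∃ a ∈ Set.Icc ((1 - 2 * s * v / (l + 2 * s * v)) ^ 2)
        ((1 + 2 * (1 + σ) * v / (l - 2 * (1 + σ) * v)) ^ 2),
      |N - a * (4 * X / l ^ 2)| ≤ E := by
  have hl₀ : 0 < l := lt_trans (by positivity) hl
  have hlow : 1 - 2 * s * v / (l + 2 * s * v) = l / (l + 2 * s * v) := by
    field_simp
    ring
  have hd : 0 < l - 2 * (1 + σ) * v := sub_pos.2 hl
  have hupp : 1 + 2 * (1 + σ) * v / (l - 2 * (1 + σ) * v) = l / (l - 2 * (1 + σ) * v) := by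
    rw [eq_div_iff hd.ne', add_mul, div_mul_cancel₀ _ hd.ne']
    ring
  have hhalf : l / 2 - (1 + σ) * v = (l - 2 * (1 + σ) * v) / 2 := by ring
  rw [hlow, hupp]
  refine exists_mem_Icc_abs_sub_mul_le (by positivity) ?_ hE ?_ ?_
  · gcongr
    nlinarith [mul_nonneg hs hv.le, mul_nonneg hσ hv.le]
  · convert hlower using 2
    field_simp
  · convert hupper using 2
    rw [hhalf]
    field_simp
    norm_num

end Coefficient

section Count

variable {r σ x e K : ℝ}

lemma half_le_max_one_sub (σ : ℝ) : 1 / 2 ≤ max σ (1 - σ) := by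
  rcases le_total σ (1 / 2) with h | h
  · exact le_max_of_le_right (by linarith)
  · exact le_max_of_le_left h

lemma NALGV_bounds_of_abs_logWeightedNALGV_sub_le (hK : 1 ≤ K) (hσ : σ ∈ Set.Icc 0 1)
    (hr : 1 < r) (hx : 0 < x) (hl : 2 * (1 + σ) * Real.log r < Real.log x)
    (hlog : 64 * K ≤ Real.log x)
    (hT : |logWeightedNALGV r σ x - x * (1 - 1 / r) * Real.log r|
        ≤ x * (1 - 1 / r) * Real.log r * Real.log r / Real.log x ∨
      r ≤ 2 ∧ |logWeightedNALGV r σ x - x * (1 - 1 / r) * Real.log r|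
        ≤ 8 * K * x ^ ((3 : ℝ) / 4)) :
    4 * (x * (1 - 1 / r) * Real.log r) / (Real.log x + 2 * max σ (1 - σ) * Real.log r) ^ 2
        - 8 * K * x ^ ((3 : ℝ) / 4) ≤ NALGV r σ x ∧
      NALGV r σ x ≤ x * (1 - 1 / r) * Real.log r / (Real.log x / 2 - (1 + σ) * Real.log r) ^ 2
        + 8 * K * x ^ ((3 : ℝ) / 4) := by
  have hv : 0 < Real.log r := Real.log_pos hr
  have hσv : 0 ≤ σ * Real.log r := mul_nonneg hσ.1 hv.le
  have hX : 0 ≤ x * (1 - 1 / r) * Real.log r :=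
    mul_nonneg (mul_nonneg hx.le (one_sub_one_div_pos hr).le) hv.le
  have hE : 0 ≤ 8 * K * x ^ ((3 : ℝ) / 4) := by positivity
  obtain ⟨hupper, hlower⟩ := logWeightedNALGV_bounds hσ.1 hr hx hl
  refine ⟨four_mul_div_sq_sub_le hX (by linarith) hv.le (by linarith) (half_le_max_one_sub σ)
      hlower hE (hT.imp_right And.right),
    le_div_sq_add hX (by linarith) (by linarith) hv.le (by linarith) hupper hE
      (hT.imp_right fun ⟨_, h⟩ => ⟨?_, h⟩)⟩
  have hlogr : Real.log r ≤ 1 := by linarith [Real.log_le_sub_one_of_pos (one_pos.trans hr)]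
  nlinarith [hσ.2]

lemma NALGV_bounds_sq (hσ : 0 ≤ σ) (hr : 1 < r) (hx : 0 < x)
    (hl : 2 * (1 + σ) * Real.log r < Real.log x) :
    4 * (x * (1 - 1 / r) * Real.log r) / (Real.log x + 2 * max σ (1 - σ) * Real.log r) ^ 2
        - x ^ 2 ≤ NALGV r σ x ∧
      NALGV r σ x ≤ x * (1 - 1 / r) * Real.log r / (Real.log x / 2 - (1 + σ) * Real.log r) ^ 2
        + x ^ 2 := by
  have hr₀ : 0 < r := one_pos.trans hr
  have hv : 0 < Real.log r := Real.log_pos hr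
  have hc : 0 < 1 - 1 / r := one_sub_one_div_pos hr
  have hl₀ : 0 < Real.log x := lt_trans (by positivity) hl
  have hvl : 2 * Real.log r ≤ Real.log x := by nlinarith
  have hx₁ : 1 < x := (Real.log_pos_iff hx.le).1 hl₀
  have hrx : r ^ σ * √x ≤ x := by
    rw [← Real.log_le_log_iff (by positivity) hx, Real.log_mul (by positivity) (by positivity),
      Real.log_rpow hr₀, Real.log_sqrt hx.le]
    nlinarith
  have hmain : 4 * (x * (1 - 1 / r) * Real.log r)
      / (Real.log x + 2 * max σ (1 - σ) * Real.log r) ^ 2 ≤ x ^ 2 :=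
    calc 4 * (x * (1 - 1 / r) * Real.log r) / (Real.log x + 2 * max σ (1 - σ) * Real.log r) ^ 2
        ≤ 4 * (x * Real.log r * Real.log r) / Real.log x ^ 2 := by
          gcongr
          · exact one_sub_one_div_le_log hr₀
          · exact le_add_of_nonneg_right (by positivity)
      _ = x * (2 * Real.log r / Real.log x) ^ 2 := by ring
      _ ≤ x * 1 ^ 2 := by
          gcongr
          exact (div_le_one hl₀).2 hvl
      _ ≤ x ^ 2 := by nlinarith
  exact ⟨(sub_nonpos.2 hmain).trans (Nat.cast_nonneg _),
    (NALGV_le_sq hr₀ hx hrx).trans (le_add_of_nonneg_left (by positivity))⟩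

theorem exists_NALGV_bounds (he₀ : 0 ≤ e) (he₁ : e < 2 / 3)
    (hθ : ∀ x : ℝ, 0 < x → |Chebyshev.theta x - x| ≤ K * x ^ e) :
    ∃ C : ℝ, 0 < C ∧ ∀ r x σ : ℝ, σ ∈ Set.Icc (0 : ℝ) 1 → 1 < r → 0 < x →
      2 * (1 + σ) * Real.log r < Real.log x →
      4 * (x * (1 - 1 / r) * Real.log r) / (Real.log x + 2 * max σ (1 - σ) * Real.log r) ^ 2
          - C * x ^ ((3 : ℝ) / 4) ≤ NALGV r σ x ∧
        NALGV r σ x ≤ x * (1 - 1 / r) * Real.log r / (Real.log x / 2 - (1 + σ) * Real.log r) ^ 2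
          + C * x ^ ((3 : ℝ) / 4) := by
  have hK : 1 ≤ K := one_le_of_abs_theta_sub_le hθ
  have hK' : 1 ≤ 2 * (2 + 1 / (1 - e)) * K ^ 2 := by
    have : 0 ≤ 1 / (1 - e) := one_div_nonneg.2 (by linarith)
    nlinarith
  set K' := 2 * (2 + 1 / (1 - e)) * K ^ 2
  obtain ⟨x₀, hx₀⟩ := eventually_atTop.1 <|
    (Real.tendsto_log_atTop.eventually_ge_atTop (64 * K')).and <|
    (eventually_const_mul_log_le_rpow (K := 16 * K') (s := 1 - 3 / 2 * e) (by linarith)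
      (by positivity)).and
    (eventually_const_mul_log_le_rpow (K := 16 * K') (s := (1 - e) / 4) (by linarith)
      (by positivity))
  refine ⟨8 * K' + x₀ ^ 2, by positivity, fun r x σ hσ hr hx hl => ?_⟩
  have hl₀ : 0 < Real.log x :=
    lt_trans (mul_pos (by linarith [hσ.1]) (Real.log_pos hr)) hl
  have hx₁ : 1 < x := (Real.log_pos_iff hx.le).1 hl₀
  suffices h : ∃ E ≤ (8 * K' + x₀ ^ 2) * x ^ ((3 : ℝ) / 4),
      4 * (x * (1 - 1 / r) * Real.log r) / (Real.log x + 2 * max σ (1 - σ) * Real.log r) ^ 2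
          - E ≤ NALGV r σ x ∧
        NALGV r σ x ≤ x * (1 - 1 / r) * Real.log r / (Real.log x / 2 - (1 + σ) * Real.log r) ^ 2
          + E by
    obtain ⟨E, hE, hlower, hupper⟩ := h
    exact ⟨by linarith, by linarith⟩
  rcases le_or_gt x₀ x with hlarge | hsmall
  · obtain ⟨hlog, hpow, hpow'⟩ := hx₀ x hlarge
    refine ⟨8 * K' * x ^ ((3 : ℝ) / 4), ?_,
      NALGV_bounds_of_abs_logWeightedNALGV_sub_le hK' hσ hr hx hl hlog
        (abs_logWeightedNALGV_sub_le_or (by linarith) he₀ (by linarith) hσ hr hx₁ hl hlog hpow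
          hpow' (abs_logWeightedNALGV_sub_le he₀ (by linarith) hθ hr hx))⟩
    gcongr
    exact le_add_of_nonneg_right (sq_nonneg _)
  · refine ⟨x ^ 2, ?_, NALGV_bounds_sq hσ.1 hr hx hl⟩
    calc x ^ 2 ≤ x₀ ^ 2 := by gcongr
      _ ≤ 8 * K' + x₀ ^ 2 := le_add_of_nonneg_left (by positivity)
      _ ≤ (8 * K' + x₀ ^ 2) * x ^ ((3 : ℝ) / 4) :=
          le_mul_of_one_le_right (by positivity) (Real.one_le_rpow hx₁.le (by norm_num))

end Count

lemma re_le_half_of_riemannHypothesis (hRH : RiemannHypothesis) {s : ℂ} (hs : riemannZeta s = 0) :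
    s.re ≤ 1 / 2 := by
  by_cases htrivial : ∃ n : ℕ, s = -2 * (n + 1)
  · obtain ⟨n, rfl⟩ := htrivial
    have hre : (-2 * ((n : ℂ) + 1)).re = -2 * ((n : ℝ) + 1) := by simp
    rw [hre]
    linarith [n.cast_nonneg (α := ℝ)]
  · exact (hRH s hs htrivial fun h => riemannZeta_one_ne_zero (h ▸ hs)).le

theorem NALGV_asymptotics_general {Θ : ℝ} (hΘ : Θ < 2 / 3)
    (hζ : ∀ s : ℂ, riemannZeta s = 0 → s.re ≤ Θ) :
    ∃ C : ℝ, 0 < C ∧ ∀ r x σ : ℝ, σ ∈ Set.Icc (0 : ℝ) 1 → 1 < r → 0 < x →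
      2 * (1 + σ) * Real.log r < Real.log x →
      ∃ atil ∈ Set.Icc
          ((1 - 2 * max σ (1 - σ) * Real.log r
              / (Real.log x + 2 * max σ (1 - σ) * Real.log r)) ^ 2)
          ((1 + 2 * (1 + σ) * Real.log r
              / (Real.log x - 2 * (1 + σ) * Real.log r)) ^ 2),
        |(NALGV r σ x : ℝ)
            - atil * (4 * x / (Real.log x) ^ 2) * (Real.log r - Real.log r / r)|
          ≤ C * x ^ ((3 : ℝ) / 4) := by
  obtain ⟨e, hΘe, he₁⟩ := exists_between (max_lt hΘ (by norm_num : (1 / 2 : ℝ) < 2 / 3))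
  obtain ⟨-, he₀⟩ := max_lt_iff.1 hΘe
  obtain ⟨K, hθ⟩ := exists_abs_theta_sub_le (fun s hs => (hζ s hs).trans (le_max_left Θ (1 / 2)))
    (le_max_of_le_right (by norm_num)) hΘe he₀.le (by linarith)
  obtain ⟨C, hC, hbounds⟩ := exists_NALGV_bounds (by linarith) he₁ hθ
  refine ⟨C, hC, fun r x σ hσ hr hx hl => ?_⟩
  obtain ⟨hlower, hupper⟩ := hbounds r x σ hσ hr hx hl
  have hv : 0 < Real.log r := Real.log_pos hr
  obtain ⟨a, ha, hdist⟩ := exists_coefficient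
    (mul_pos (mul_pos hx (one_sub_one_div_pos hr)) hv) hv hσ.1
    (hσ.1.trans (le_max_left _ _)) hl (by positivity) hlower hupper
  refine ⟨a, ha, ?_⟩
  convert hdist using 3
  ring

/-- Theorem 4.9 of the paper (count of shifted algorithmic RSA integers, under RH). -/
theorem NALGV_asymptotics (hRH : RiemannHypothesis) :
    ∃ C : ℝ, 0 < C ∧ ∀ r x σ : ℝ, σ ∈ Set.Icc (0 : ℝ) 1 → 1 < r →
      2 * (1 + σ) * Real.log r < Real.log x → (2657 : ℝ) ≤ Real.sqrt x / r →
      ∃ atil ∈ Set.Icc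
          ((1 - 2 * max σ (1 - σ) * Real.log r
              / (Real.log x + 2 * max σ (1 - σ) * Real.log r)) ^ 2)
          ((1 + 2 * (1 + σ) * Real.log r
              / (Real.log x - 2 * (1 + σ) * Real.log r)) ^ 2),
        |(NALGV r σ x : ℝ)
            - atil * (4 * x / (Real.log x) ^ 2) * (Real.log r - Real.log r / r)|
          ≤ C * x ^ ((3 : ℝ) / 4) * r ^ ((1 : ℝ) / 2) := by
  obtain ⟨C, hC, hmain⟩ := NALGV_asymptotics_general (by norm_num)
    fun s hs => re_le_half_of_riemannHypothesis hRH hs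
  refine ⟨C, hC, fun r x σ hσ hr hl hxr => ?_⟩
  have hx : 0 < x := by
    by_contra! hx
    rw [Real.sqrt_eq_zero_of_nonpos hx, zero_div] at hxr
    norm_num at hxr
  obtain ⟨atil, hatil, hdist⟩ := hmain r x σ hσ hr hx hl
  exact ⟨atil, hatil, hdist.trans
    (le_mul_of_one_le_right (by positivity) (Real.one_le_rpow hr.le (by norm_num)))⟩
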